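/- Let (c₁,c₂) ∈ ℝ². The operator τ₂(c₁,c₂) restricted to C₀^∞((0,∞)) is essentially self-adjoint in L²((0,∞); dr) if and only if c₂ ≥ 45 + 12c₁ + c₁² when c₁ ≥ −11/4, and c₂ ≥ −105/16 − (19/2)c₁ when c₁ < −11/4. -/

import Mathlib

open MeasureTheory

noncomputable section

/-- A densely defined operator `T` in a complex Hilbert space is *essentially self-adjoint*
if its adjoint `T*` is self-adjoint (equivalently, its closure is self-adjoint). -/
def EssentiallySelfAdjoint {H : Type*} [NormedAddCommGroup H] [InnerProductSpace ℂ H]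
    [CompleteSpace H] (T : H →ₗ.[ℂ] H) : Prop :=
  Dense (T.domain : Set H) ∧ IsSelfAdjoint T.adjoint

/-- Lebesgue measure on `(0,∞)`. -/
def lebIoi : Measure ℝ := volume.restrict (Set.Ioi 0)

/-- The graph of the operator given by a formal differential expression `L` with domain
`C₀^∞((0,∞))`, as a subspace of `L²((0,∞); dr) × L²((0,∞); dr)`. -/
def graphOnHalfLine (L : (ℝ → ℂ) → (ℝ → ℂ)) : Submodule ℂ (Lp ℂ 2 lebIoi × Lp ℂ 2 lebIoi) :=
  Submodule.span ℂ {p | ∃ φ : ℝ → ℂ, ContDiff ℝ (⊤ : ℕ∞) φ ∧ HasCompactSupport φ ∧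
    tsupport φ ⊆ Set.Ioi 0 ∧
    (p.1 : ℝ → ℂ) =ᵐ[lebIoi] φ ∧ (p.2 : ℝ → ℂ) =ᵐ[lebIoi] L φ}

/-- The operator in `L²((0,∞); dr)` given by a formal differential expression `L`
with domain `C₀^∞((0,∞))`. -/
def opOnHalfLine (L : (ℝ → ℂ) → (ℝ → ℂ)) : Lp ℂ 2 lebIoi →ₗ.[ℂ] Lp ℂ 2 lebIoi :=
  (graphOnHalfLine L).toLinearPMap

/-- The differential expression `τ₂(c₁,c₂) = d⁴/dr⁴ + c₁ (r⁻² d²/dr² + d²/dr² r⁻²) + c₂ r⁻⁴`. -/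
def tau2exp (c₁ c₂ : ℝ) (φ : ℝ → ℂ) : ℝ → ℂ := fun r =>
  deriv (deriv (deriv (deriv φ))) r
    + (c₁ : ℂ) * (((r : ℂ) ^ 2)⁻¹ * deriv (deriv φ) r
        + deriv (deriv (fun s : ℝ => ((s : ℂ) ^ 2)⁻¹ * φ s)) r)
    + (c₂ : ℂ) * ((r : ℂ) ^ 4)⁻¹ * φ r

/-- The operator `τ₂(c₁,c₂)|_{C₀^∞((0,∞))}` in `L²((0,∞); dr)`. -/
def tau2op (c₁ c₂ : ℝ) : Lp ℂ 2 lebIoi →ₗ.[ℂ] Lp ℂ 2 lebIoi :=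
  opOnHalfLine (tau2exp c₁ c₂)

/-
In the variable `t = log r`, the unitary map `u ↦ e^{t/2} u(e^t)` turns `τ₂` into the operator
`e^{-2t} P(D) e^{-2t}` in `L²(ℝ)` with the even real symbol `P(z) = z⁴ + a z² + b`,
`a = 2c₁ - 5/2`, `b = 9/16 + 3c₁/2 + c₂`. More generally, for `κ > 0` and a formally self-adjoint
`P ≠ 0`, the operator `e^{-κt} P(D) e^{-κt}` is essentially self-adjoint if and only if no root of
`P` lies in the strip `|Re z| < κ`.

If no root does, let `x` be in the domain of the adjoint and put `g = e^{-κt} x`. After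
mollification `g` is smooth, each `e^{κt} Q(D) g` tends to `0` at `±∞`, and `P(D) g` tends to `0` at
`-∞`. Hence the derivatives of `g` vanish at `+∞`, and, on integrating the first-order factors of
`P(D) g` one by one, also at `-∞`. The boundary form of two such functions is therefore zero at both
ends, so the adjoint is symmetric.

Conversely, a root `z` of multiplicity `n + 1` in the strip gives the solutions `e^{zt}` and
`tⁿ e^{-conj z t}` of `P(D) g = 0`. Cut off on the right, both lie in the domain of the adjoint, and
their boundary form near `-∞` is the nonzero constant `(-1)ⁿ n! S(z)`, where `P = (X - z)ⁿ⁺¹ S`.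

For the biquadratic `P`, substituting `w = z²` turns the root condition into one on the two roots of
a real quadratic polynomial, since `2 (Re z)² = |w| + Re w`.
-/

open Filter Topology Polynomial
open scoped ENNReal ContDiff ComplexConjugate Convolution

lemma mem_span_iff_of_linearEquiv {R M N : Type*} [Semiring R] [AddCommMonoid M] [Module R M]
    [AddCommMonoid N] [Module R N] (e : M ≃ₗ[R] N) {S : Set M} {T : Set N}
    (h : ∀ x, e x ∈ T ↔ x ∈ S) (x : M) :
    e x ∈ Submodule.span R T ↔ x ∈ Submodule.span R S := by
  have himage : e '' S = T := by
    rw [e.image_eq_preimage_symm]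
    ext y
    rw [Set.mem_preimage, ← h, e.apply_symm_apply]
  rw [← himage, ← LinearEquiv.coe_coe, ← Submodule.map_span, Submodule.mem_map_equiv,
    LinearEquiv.coe_coe, e.symm_apply_apply]

section HilbertSpace

variable {H K : Type*} [NormedAddCommGroup H] [InnerProductSpace ℂ H]
  [NormedAddCommGroup K] [InnerProductSpace ℂ K]

lemma mem_adjoint_iff_inner {g : Submodule ℂ (H × H)} {x : H × H} :
    x ∈ g.adjoint ↔ ∀ p ∈ g, inner ℂ p.2 x.1 = inner ℂ p.1 x.2 := by
  simp only [Submodule.mem_adjoint_iff, sub_eq_zero, Prod.forall]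

lemma mem_adjoint_span_iff {S : Set (H × H)} {x : H × H} :
    x ∈ (Submodule.span ℂ S).adjoint ↔ ∀ p ∈ S, inner ℂ p.2 x.1 = inner ℂ p.1 x.2 := by
  rw [mem_adjoint_iff_inner]
  refine ⟨fun h p hp => h p (Submodule.subset_span hp), fun h p hp => ?_⟩
  induction hp using Submodule.span_induction with
  | mem p hp => exact h p hp
  | zero => simp
  | add p q _ _ hp hq => simp [hp, hq]
  | smul c p _ hp => simp [hp]

lemma graph_toLinearPMap_of_le_adjoint {g : Submodule ℂ (H × H)}
    (hd : Dense (g.map (LinearMap.fst ℂ H H) : Set H)) (hs : g ≤ g.adjoint) :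
    g.toLinearPMap.graph = g := by
  refine g.toLinearPMap_graph_eq fun x hx hx1 => hd.eq_zero_of_inner_right ℂ ?_
  rintro _ ⟨p, hp, rfl⟩
  simpa [hx1] using (mem_adjoint_iff_inner.1 (hs hx) p hp).symm

theorem essentiallySelfAdjoint_toLinearPMap_iff [CompleteSpace H] {g : Submodule ℂ (H × H)}
    (hd : Dense (g.map (LinearMap.fst ℂ H H) : Set H)) (hs : g ≤ g.adjoint) :
    EssentiallySelfAdjoint g.toLinearPMap ↔ g.adjoint ≤ g.adjoint.adjoint := by
  have hd₁ : Dense (g.toLinearPMap.domain : Set H) := by rwa [Submodule.toLinearPMap_domain]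
  have hg₁ : g.toLinearPMap.adjoint.graph = g.adjoint := by
    rw [LinearPMap.adjoint_graph_eq_graph_adjoint hd₁, graph_toLinearPMap_of_le_adjoint hd hs]
  have hd₂ : Dense (g.toLinearPMap.adjoint.domain : Set H) := by
    rw [← LinearPMap.graph_map_fst_eq_domain, hg₁]
    exact hd.mono (Submodule.map_mono hs)
  have hg₂ : g.toLinearPMap.adjoint.adjoint.graph = g.adjoint.adjoint := by
    rw [LinearPMap.adjoint_graph_eq_graph_adjoint hd₂, hg₁]
  have hle : g.adjoint.adjoint ≤ g.adjoint := fun x hx =>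
    mem_adjoint_iff_inner.2 fun p hp => mem_adjoint_iff_inner.1 hx p (hs hp)
  calc EssentiallySelfAdjoint g.toLinearPMap
      ↔ g.toLinearPMap.adjoint.adjoint = g.toLinearPMap.adjoint := by
        rw [EssentiallySelfAdjoint, and_iff_right hd₁, LinearPMap.isSelfAdjoint_def]
    _ ↔ g.adjoint.adjoint = g.adjoint := by
        rw [← hg₂, ← hg₁]
        exact ⟨congrArg _, LinearPMap.eq_of_eq_graph⟩
    _ ↔ g.adjoint ≤ g.adjoint.adjoint := ⟨fun h => h.ge, hle.antisymm⟩

section UnitaryEquiv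

variable (U : H ≃ₗᵢ[ℂ] K) {g : Submodule ℂ (H × H)} {g' : Submodule ℂ (K × K)}

lemma le_iff_le_of_unitaryEquiv {a b : Submodule ℂ (H × H)} {a' b' : Submodule ℂ (K × K)}
    (ha : ∀ p : H × H, (U p.1, U p.2) ∈ a' ↔ p ∈ a)
    (hb : ∀ p : H × H, (U p.1, U p.2) ∈ b' ↔ p ∈ b) : a ≤ b ↔ a' ≤ b' := by
  refine ⟨fun hab q hq => ?_, fun hab p hp => (hb p).1 (hab ((ha p).2 hp))⟩
  have hq' : q = (U (U.symm q.1), U (U.symm q.2)) := by simp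
  rw [hq'] at hq ⊢
  exact (hb (_, _)).2 (hab ((ha (_, _)).1 hq))

lemma mem_adjoint_iff_of_unitaryEquiv (h : ∀ p : H × H, (U p.1, U p.2) ∈ g' ↔ p ∈ g)
    (x : H × H) : (U x.1, U x.2) ∈ g'.adjoint ↔ x ∈ g.adjoint := by
  simp only [mem_adjoint_iff_inner]
  refine ⟨fun hx p hp => ?_, fun hx q hq => ?_⟩
  · simpa only [U.inner_map_map] using hx (U p.1, U p.2) ((h p).2 hp)
  · have hq' : q = (U (U.symm q.1), U (U.symm q.2)) := by simp
    rw [hq'] at hq ⊢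
    simpa only [U.inner_map_map] using hx (U.symm q.1, U.symm q.2) ((h (_, _)).1 hq)

theorem essentiallySelfAdjoint_iff_of_unitaryEquiv [CompleteSpace H] [CompleteSpace K]
    (h : ∀ p : H × H, (U p.1, U p.2) ∈ g' ↔ p ∈ g)
    (hd : Dense (g'.map (LinearMap.fst ℂ K K) : Set K)) (hs : g' ≤ g'.adjoint) :
    EssentiallySelfAdjoint g.toLinearPMap ↔ EssentiallySelfAdjoint g'.toLinearPMap := by
  have h₁ := mem_adjoint_iff_of_unitaryEquiv U h
  have h₂ := mem_adjoint_iff_of_unitaryEquiv U h₁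
  have hdg : Dense (g.map (LinearMap.fst ℂ H H) : Set H) := by
    refine (U.symm.surjective.denseRange.dense_image U.symm.continuous hd).mono ?_
    rintro _ ⟨_, ⟨q, hq, rfl⟩, rfl⟩
    exact ⟨(U.symm q.1, U.symm q.2), (h _).1 (by simpa using hq), rfl⟩
  rw [essentiallySelfAdjoint_toLinearPMap_iff hdg ((le_iff_le_of_unitaryEquiv U h h₁).2 hs),
    essentiallySelfAdjoint_toLinearPMap_iff hd hs, le_iff_le_of_unitaryEquiv U h₁ h₂]

end UnitaryEquiv

end HilbertSpace

section DifferentialOperator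

/-- The constant-coefficient differential operator `P(D)`, `D = d/dt`, with symbol `P`, acting on
complex functions on the line. -/
def diffOp (P : ℂ[X]) (g : ℝ → ℂ) : ℝ → ℂ :=
  fun t => P.sum fun k c => c * iteratedDeriv k g t

variable (P Q : ℂ[X]) {g h : ℝ → ℂ} {s : Set ℝ}

lemma diffOp_add (g : ℝ → ℂ) : diffOp (P + Q) g = diffOp P g + diffOp Q g := by
  ext t
  exact P.sum_add_index Q _ (fun _ => zero_mul _) fun _ _ _ => add_mul _ _ _

lemma diffOp_monomial (k : ℕ) (c : ℂ) (g : ℝ → ℂ) :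
    diffOp (monomial k c) g = fun t => c * iteratedDeriv k g t := by
  ext t
  exact sum_monomial_index c _ (zero_mul _)

@[simp]
lemma diffOp_C (c : ℂ) (g : ℝ → ℂ) : diffOp (C c) g = fun t => c * g t := by
  simp [← monomial_zero_left, diffOp_monomial]

lemma diffOp_C_mul (c : ℂ) (g : ℝ → ℂ) : diffOp (C c * P) g = fun t => c * diffOp P g t := by
  induction P using Polynomial.induction_on' with
  | add P Q hP hQ =>
    ext t
    rw [mul_add, diffOp_add, diffOp_add, hP, hQ]
    exact (mul_add _ _ _).symm
  | monomial k d =>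
    ext t
    simp only [C_mul_monomial, diffOp_monomial, mul_assoc]

@[simp]
lemma diffOp_X (g : ℝ → ℂ) : diffOp X g = deriv g := by
  simp [← monomial_one_one_eq_X, diffOp_monomial]

lemma diffOp_X_pow (k : ℕ) (g : ℝ → ℂ) : diffOp (X ^ k) g = iteratedDeriv k g := by
  simp [X_pow_eq_monomial, diffOp_monomial]

lemma diffOp_eqOn (hs : IsOpen s) (h_eq : s.EqOn g h) : s.EqOn (diffOp P g) (diffOp P h) :=
  fun t ht => by simp only [diffOp, h_eq.iteratedDeriv_of_isOpen hs _ ht]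

lemma contDiff_iteratedDeriv (hg : ContDiff ℝ ∞ g) (k : ℕ) : ContDiff ℝ ∞ (iteratedDeriv k g) := by
  rw [iteratedDeriv_eq_iterate]
  exact hg.iterate_deriv k

lemma contDiff_diffOp (hg : ContDiff ℝ ∞ g) : ContDiff ℝ ∞ (diffOp P g) :=
  ContDiff.sum fun k _ => contDiff_const.mul (contDiff_iteratedDeriv hg k)

lemma tsupport_iteratedDeriv_subset (g : ℝ → ℂ) (k : ℕ) :
    tsupport (iteratedDeriv k g) ⊆ tsupport g := by
  induction k with
  | zero => simp
  | succ k ih => exact iteratedDeriv_succ (f := g) ▸ tsupport_deriv_subset.trans ih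

lemma hasCompactSupport_diffOp (hg : HasCompactSupport g) : HasCompactSupport (diffOp P g) :=
  hg.mono' fun t ht => by
    contrapose! ht
    have h_zero (k : ℕ) : iteratedDeriv k g t = 0 :=
      image_eq_zero_of_notMem_tsupport fun h => ht (tsupport_iteratedDeriv_subset g k h)
    simp [diffOp, h_zero, Polynomial.sum_def]

lemma iteratedDeriv_diffOp (hg : ContDiff ℝ ∞ g) (k : ℕ) :
    iteratedDeriv k (diffOp P g) = diffOp (X ^ k * P) g := by
  induction P using Polynomial.induction_on' with
  | add P Q hP hQ =>
    ext t
    rw [mul_add, diffOp_add, diffOp_add, ← hP, ← hQ,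
      iteratedDeriv_add ((contDiff_diffOp P hg).of_le (mod_cast le_top)).contDiffAt
        ((contDiff_diffOp Q hg).of_le (mod_cast le_top)).contDiffAt, Pi.add_apply]
  | monomial n c =>
    rw [X_pow_mul_monomial, diffOp_monomial, diffOp_monomial]
    ext t
    rw [iteratedDeriv_const_mul_field, iteratedDeriv_eq_iterate, iteratedDeriv_eq_iterate,
      iteratedDeriv_eq_iterate, add_comm, Function.iterate_add_apply]

lemma diffOp_mul (hg : ContDiff ℝ ∞ g) : diffOp (P * Q) g = diffOp P (diffOp Q g) := by
  induction P using Polynomial.induction_on' with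
  | add P₁ P₂ h₁ h₂ => rw [add_mul, diffOp_add, diffOp_add, h₁, h₂]
  | monomial n c =>
    rw [diffOp_monomial, iteratedDeriv_diffOp Q hg, ← C_mul_X_pow_eq_monomial, mul_assoc,
      diffOp_C_mul]

lemma diffOp_X_sub_C (z : ℂ) (g : ℝ → ℂ) : diffOp (X - C z) g = fun t => deriv g t - z * g t := by
  rw [sub_eq_add_neg, ← C_neg, diffOp_add, diffOp_X, diffOp_C]
  ext t
  simp [sub_eq_add_neg]

lemma contDiff_cexp_mul (z : ℂ) : ContDiff ℝ ∞ fun t : ℝ => Complex.exp (z * t) :=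
  (contDiff_const.mul Complex.ofRealCLM.contDiff).cexp

lemma hasDerivAt_cexp_mul (z : ℂ) (t : ℝ) :
    HasDerivAt (fun t : ℝ => Complex.exp (z * t)) (z * Complex.exp (z * t)) t := by
  have h := ((hasDerivAt_id t).ofReal_comp.const_mul z).cexp
  simpa [mul_comm] using h

lemma diffOp_cexp_mul (z : ℂ) :
    diffOp P (fun t : ℝ => Complex.exp (z * t)) = fun t : ℝ => P.eval z * Complex.exp (z * t) := by
  have h_iter (k : ℕ) : iteratedDeriv k (fun t : ℝ => Complex.exp (z * t))
      = fun t : ℝ => z ^ k * Complex.exp (z * t) := by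
    induction k with
    | zero => simp
    | succ k ih =>
      ext t
      rw [iteratedDeriv_succ, ih, ((hasDerivAt_cexp_mul z t).const_mul _).deriv]
      ring
  ext t
  simp only [diffOp, h_iter, eval_eq_sum, Polynomial.sum_def, Finset.sum_mul, mul_assoc]

lemma contDiff_pow_mul_cexp (n : ℕ) (w : ℂ) :
    ContDiff ℝ ∞ fun t : ℝ => (t : ℂ) ^ n * Complex.exp (w * t) :=
  (Complex.ofRealCLM.contDiff.pow n).mul (contDiff_cexp_mul w)

lemma diffOp_X_sub_C_pow (n : ℕ) (w : ℂ) :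
    diffOp ((X - C w) ^ n) (fun t : ℝ => (t : ℂ) ^ n * Complex.exp (w * t))
      = fun t : ℝ => (n.factorial : ℂ) * Complex.exp (w * t) := by
  induction n with
  | zero => rw [pow_zero, ← C_1, diffOp_C]; simp
  | succ n ih =>
    have h_step : diffOp (X - C w) (fun t : ℝ => (t : ℂ) ^ (n + 1) * Complex.exp (w * t))
        = diffOp (C (n + 1 : ℂ)) fun t : ℝ => (t : ℂ) ^ n * Complex.exp (w * t) := by
      ext t
      have h := ((hasDerivAt_id t).ofReal_comp.pow (n + 1)).mul (hasDerivAt_cexp_mul w t)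
      have h_deriv : deriv (fun t : ℝ => (t : ℂ) ^ (n + 1) * Complex.exp (w * t)) t = _ := h.deriv
      simp only [diffOp_X_sub_C, diffOp_C, h_deriv]
      simp only [Nat.cast_add, Nat.cast_one, id_eq, add_tsub_cancel_right, Complex.ofReal_one,
        mul_one, Pi.pow_apply]
      ring
    rw [pow_succ, diffOp_mul _ _ (contDiff_pow_mul_cexp _ _), h_step,
      ← diffOp_mul _ _ (contDiff_pow_mul_cexp _ _), mul_comm, diffOp_C_mul, ih]
    ext t
    push_cast [Nat.factorial_succ]
    ring

end DifferentialOperator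

section FormalAdjoint

/-- The symbol of the formal adjoint of `P(D)` with respect to the `L²` inner product:
`P†(z) = conj (P (-conj z))`. -/
def formalAdjoint (P : ℂ[X]) : ℂ[X] := (P.map (starRingEnd ℂ)).comp (-X)

lemma formalAdjoint_add (P Q : ℂ[X]) :
    formalAdjoint (P + Q) = formalAdjoint P + formalAdjoint Q := by
  simp [formalAdjoint]

lemma formalAdjoint_mul (P Q : ℂ[X]) :
    formalAdjoint (P * Q) = formalAdjoint P * formalAdjoint Q := by
  simp [formalAdjoint]

lemma formalAdjoint_pow (P : ℂ[X]) (n : ℕ) : formalAdjoint (P ^ n) = formalAdjoint P ^ n := by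
  simp [formalAdjoint]

lemma formalAdjoint_X_sub_C (z : ℂ) : formalAdjoint (X - C z) = C (-1) * (X - C (-conj z)) := by
  simp only [formalAdjoint, Polynomial.map_sub, map_X, map_C, sub_comp, X_comp, C_comp, map_neg,
    map_one]
  ring

lemma formalAdjoint_monomial (k : ℕ) (c : ℂ) :
    formalAdjoint (monomial k c) = monomial k ((-1) ^ k * conj c) := by
  simp only [formalAdjoint, ← C_mul_X_pow_eq_monomial, Polynomial.map_mul, map_C,
    Polynomial.map_pow, map_X, mul_comp, C_comp, pow_comp, X_comp, neg_pow (X : ℂ[X]), map_mul,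
    map_pow, map_neg, map_one]
  ring

lemma eval_formalAdjoint (P : ℂ[X]) (z : ℂ) :
    (formalAdjoint P).eval z = conj (P.eval (-conj z)) := by
  simp [formalAdjoint, eval_map, ← eval₂_hom]

lemma iteratedDeriv_conj (k : ℕ) (g : ℝ → ℂ) :
    iteratedDeriv k (fun t => conj (g t)) = fun t => conj (iteratedDeriv k g t) := by
  induction k with
  | zero => simp
  | succ k ih =>
    rw [iteratedDeriv_succ, iteratedDeriv_succ, ih]
    ext t
    exact deriv.star

lemma diffOp_conj_comp_sub (P : ℂ[X]) (ρ : ℝ → ℂ) (t s : ℝ) :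
    diffOp P (fun s => conj (ρ (t - s))) s = conj (diffOp (formalAdjoint P) ρ (t - s)) := by
  induction P using Polynomial.induction_on' with
  | add P Q hP hQ => simp [diffOp_add, formalAdjoint_add, hP, hQ]
  | monomial k c =>
    rw [formalAdjoint_monomial, diffOp_monomial, diffOp_monomial]
    simp only [iteratedDeriv_conj, iteratedDeriv_comp_const_sub, Complex.real_smul, map_mul]
    simp only [Complex.ofReal_pow, Complex.ofReal_neg, Complex.ofReal_one, map_pow, map_neg,
      map_one, Complex.conj_conj]
    ring

end FormalAdjoint

section LagrangeForm

/-- The boundary form of Lagrange's identity for `P(D)`: the sesquilinear concomitant whose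
derivative is `P(D)g · conj h - g · conj (P†(D)h)`. -/
def lagrangeForm (P : ℂ[X]) (g h : ℝ → ℂ) : ℝ → ℂ := fun t => P.sum fun k c =>
  c * ∑ j ∈ Finset.range k, (-1) ^ j * iteratedDeriv (k - 1 - j) g t * conj (iteratedDeriv j h t)

variable (P : ℂ[X]) {g h : ℝ → ℂ} {s : Set ℝ}

lemma lagrangeForm_add (P Q : ℂ[X]) (g h : ℝ → ℂ) :
    lagrangeForm (P + Q) g h = lagrangeForm P g h + lagrangeForm Q g h := by
  ext t
  exact P.sum_add_index Q _ (fun _ => zero_mul _) fun _ _ _ => add_mul _ _ _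

lemma lagrangeForm_monomial (k : ℕ) (c : ℂ) (g h : ℝ → ℂ) :
    lagrangeForm (monomial k c) g h = fun t => c * ∑ j ∈ Finset.range k,
      (-1) ^ j * iteratedDeriv (k - 1 - j) g t * conj (iteratedDeriv j h t) := by
  ext t
  exact sum_monomial_index c _ (zero_mul _)

lemma hasDerivAt_iteratedDeriv (hg : ContDiff ℝ ∞ g) (k : ℕ) (t : ℝ) :
    HasDerivAt (iteratedDeriv k g) (iteratedDeriv (k + 1) g t) t := by
  rw [iteratedDeriv_succ]
  exact ((contDiff_iteratedDeriv hg k).differentiable (by simp) t).hasDerivAt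

theorem hasDerivAt_lagrangeForm (hg : ContDiff ℝ ∞ g) (hh : ContDiff ℝ ∞ h) (t : ℝ) :
    HasDerivAt (lagrangeForm P g h)
      (diffOp P g t * conj (h t) - g t * conj (diffOp (formalAdjoint P) h t)) t := by
  induction P using Polynomial.induction_on' with
  | add P Q hP hQ =>
    rw [lagrangeForm_add, diffOp_add, formalAdjoint_add, diffOp_add]
    refine (hP.add hQ).congr_deriv ?_
    simp only [Pi.add_apply, map_add]
    ring
  | monomial k c =>
    let u (j : ℕ) : ℂ := (-1) ^ j * iteratedDeriv (k - j) g t * conj (iteratedDeriv j h t)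
    have h_term (j : ℕ) (hj : j ∈ Finset.range k) : HasDerivAt
        (fun t => (-1) ^ j * iteratedDeriv (k - 1 - j) g t * conj (iteratedDeriv j h t))
        (u j - u (j + 1)) t := by
      refine (((hasDerivAt_iteratedDeriv hg _ t).const_mul _).mul
        (hasDerivAt_iteratedDeriv hh j t).star).congr_deriv ?_
      rw [Finset.mem_range] at hj
      simp only [u, show k - 1 - j + 1 = k - j by lia, show k - (j + 1) = k - 1 - j by lia]
      simp only [RCLike.star_def]
      ring
    rw [lagrangeForm_monomial, diffOp_monomial, formalAdjoint_monomial, diffOp_monomial]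
    refine ((HasDerivAt.fun_sum h_term).const_mul c).congr_deriv ?_
    rw [Finset.sum_range_sub']
    simp only [pow_zero, tsub_zero, one_mul, iteratedDeriv_zero, tsub_self, map_mul, map_pow,
      map_neg, map_one, Complex.conj_conj, u]
    ring

lemma tendsto_lagrangeForm {l : Filter ℝ} (hg : ∀ k, Tendsto (iteratedDeriv k g) l (𝓝 0))
    (hh : ∀ k, Tendsto (iteratedDeriv k h) l (𝓝 0)) : Tendsto (lagrangeForm P g h) l (𝓝 0) := by
  have h_term (k j : ℕ) : Tendsto
      (fun t => (-1) ^ j * iteratedDeriv (k - 1 - j) g t * conj (iteratedDeriv j h t)) l (𝓝 0) := by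
    have h_conj : Tendsto (fun t => conj (iteratedDeriv j h t)) l (𝓝 (conj 0)) :=
      (Complex.continuous_conj.tendsto 0).comp (hh j)
    simpa using ((hg (k - 1 - j)).const_mul ((-1) ^ j)).mul h_conj
  have h_sum : Tendsto (lagrangeForm P g h) l _ := tendsto_finsetSum P.support fun k _ =>
    (tendsto_finsetSum (Finset.range k) fun j _ => h_term k j).const_mul (P.coeff k)
  simpa only [Finset.sum_const_zero, mul_zero] using h_sum

theorem integral_diffOp_mul_conj_sub (hg : ContDiff ℝ ∞ g) (hh : ContDiff ℝ ∞ h) {a b : ℂ}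
    (h_bot : Tendsto (lagrangeForm P g h) atBot (𝓝 a))
    (h_top : Tendsto (lagrangeForm P g h) atTop (𝓝 b))
    (h_int₁ : Integrable fun t => diffOp P g t * conj (h t))
    (h_int₂ : Integrable fun t => g t * conj (diffOp (formalAdjoint P) h t)) :
    (∫ t, diffOp P g t * conj (h t)) - ∫ t, g t * conj (diffOp (formalAdjoint P) h t) = b - a := by
  rw [← integral_sub h_int₁ h_int₂]
  exact integral_of_hasDerivAt_of_tendsto (hasDerivAt_lagrangeForm P hg hh) (h_int₁.sub h_int₂)
    h_bot h_top

lemma hasCompactSupport_lagrangeForm (g : ℝ → ℂ) (hhc : HasCompactSupport h) :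
    HasCompactSupport (lagrangeForm P g h) :=
  hhc.mono' fun t ht => by
    contrapose! ht
    have h_zero (k : ℕ) : iteratedDeriv k h t = 0 :=
      image_eq_zero_of_notMem_tsupport fun h' => ht (tsupport_iteratedDeriv_subset h k h')
    simp [lagrangeForm, Polynomial.sum, h_zero]

theorem integral_diffOp_mul_conj (hg : ContDiff ℝ ∞ g) (hh : ContDiff ℝ ∞ h)
    (hhc : HasCompactSupport h) :
    ∫ t, diffOp P g t * conj (h t) = ∫ t, g t * conj (diffOp (formalAdjoint P) h t) := by
  have h_lim := (hasCompactSupport_lagrangeForm P g hhc).is_zero_at_infty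
  have hQ := contDiff_diffOp (formalAdjoint P) hh
  have hQc := hasCompactSupport_diffOp (formalAdjoint P) hhc
  rw [← sub_eq_zero, integral_diffOp_mul_conj_sub P hg hh (h_lim.mono_left atBot_le_cocompact)
    (h_lim.mono_left atTop_le_cocompact), sub_zero]
  · exact ((contDiff_diffOp P hg).continuous.mul
      (Complex.continuous_conj.comp hh.continuous)).integrable_of_hasCompactSupport
      (hhc.comp_left (map_zero conj)).mul_left
  · exact (hg.continuous.mul
      (Complex.continuous_conj.comp hQ.continuous)).integrable_of_hasCompactSupport
      (hQc.comp_left (map_zero conj)).mul_left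

lemma lagrangeForm_eqOn (hs : IsOpen s) {g₁ g₂ h₁ h₂ : ℝ → ℂ} (hg : s.EqOn g₁ g₂)
    (hh : s.EqOn h₁ h₂) : s.EqOn (lagrangeForm P g₁ h₁) (lagrangeForm P g₂ h₂) := fun t ht => by
  simp only [lagrangeForm, hg.iteratedDeriv_of_isOpen hs _ ht, hh.iteratedDeriv_of_isOpen hs _ ht]

lemma lagrangeForm_X_sub_C_mul_cexp (R : ℂ[X]) (z : ℂ) (h : ℝ → ℂ) :
    lagrangeForm ((X - C z) * R) (fun t : ℝ => Complex.exp (z * t)) h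
      = fun t : ℝ => Complex.exp (z * t) * conj (diffOp (formalAdjoint R) h t) := by
  induction R using Polynomial.induction_on' with
  | add R₁ R₂ h₁ h₂ =>
    ext t
    simp only [mul_add, lagrangeForm_add, formalAdjoint_add, diffOp_add, h₁, h₂, Pi.add_apply,
      map_add]
  | monomial k c =>
    have h_split : (X - C z) * monomial k c = monomial (k + 1) c + monomial k (-(z * c)) := by
      rw [sub_mul, X_mul_monomial, C_mul_monomial, map_neg, sub_eq_add_neg]
    have h_iter (j : ℕ) (t : ℝ) : iteratedDeriv j (fun t : ℝ => Complex.exp (z * t)) t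
        = z ^ j * Complex.exp (z * t) := by
      rw [← diffOp_X_pow, diffOp_cexp_mul, eval_pow, eval_X]
    ext t
    rw [h_split, lagrangeForm_add, Pi.add_apply, lagrangeForm_monomial, lagrangeForm_monomial,
      formalAdjoint_monomial, diffOp_monomial]
    simp only [h_iter, Finset.sum_range_succ, Nat.add_sub_cancel, Nat.sub_self, pow_zero, map_mul,
      map_pow, map_neg, map_one, Complex.conj_conj, mul_add, Finset.mul_sum]
    rw [add_assoc, add_comm, add_assoc, ← Finset.sum_add_distrib, Finset.sum_eq_zero]
    · ring
    · intro j hj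
      rw [Finset.mem_range] at hj
      rw [show k - j = k - 1 - j + 1 by lia]
      ring

end LagrangeForm

section Decay

lemma norm_cexp_mul_ofReal (z : ℂ) (t : ℝ) : ‖Complex.exp (z * t)‖ = Real.exp (z.re * t) := by
  simp [Complex.norm_exp]

/-- Integrate `(e^{-zt} y)' = e^{-zt} (y' - z y)`. -/
lemma norm_cexp_neg_mul_sub_le {y : ℝ → ℂ} (hy : Differentiable ℝ y) {z : ℂ} (hz : z.re ≠ 0)
    {ε s t : ℝ} (hst : s ≤ t) (hε : ∀ r ≤ t, ‖deriv y r - z * y r‖ ≤ ε) :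
    ‖Complex.exp (-z * t) * y t - Complex.exp (-z * s) * y s‖
      ≤ ε / z.re * (Real.exp (-z.re * s) - Real.exp (-z.re * t)) := by
  have h_deriv (r : ℝ) : HasDerivAt
      (fun r : ℝ => Complex.exp (-z * r) * y r - Complex.exp (-z * s) * y s)
      (Complex.exp (-z * r) * (deriv y r - z * y r)) r := by
    refine (((hasDerivAt_cexp_mul (-z) r).mul (hy r).hasDerivAt).sub_const _).congr_deriv ?_
    ring
  have h_bound (r : ℝ) : HasDerivAt
      (fun r : ℝ => ε / z.re * (Real.exp (-z.re * s) - Real.exp (-z.re * r)))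
      (ε * Real.exp (-z.re * r)) r := by
    have h := ((hasDerivAt_const r (Real.exp (-z.re * s))).sub
      ((hasDerivAt_id r).const_mul (-z.re)).exp).const_mul (ε / z.re)
    refine h.congr_deriv ?_
    simp only [id]
    field_simp
    ring
  refine image_norm_le_of_norm_deriv_right_le_deriv_boundary
    (fun r _ => (h_deriv r).continuousAt.continuousWithinAt)
    (fun r _ => (h_deriv r).hasDerivWithinAt) (by simp) h_bound (fun r hr => ?_) ⟨hst, le_rfl⟩
  rw [norm_mul, norm_cexp_mul_ofReal, Complex.neg_re, mul_comm]
  exact mul_le_mul_of_nonneg_right (hε r hr.2.le) (Real.exp_pos _).le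

lemma exists_forall_le_norm_le {k : ℝ → ℂ} (hk : Tendsto k atBot (𝓝 0)) {ε : ℝ} (hε : 0 < ε) :
    ∃ T, ∀ t ≤ T, ‖k t‖ ≤ ε :=
  eventually_atBot.1 ((tendsto_zero_iff_norm_tendsto_zero.1 hk).eventually_le_const hε)

lemma tendsto_exp_mul_atBot {a : ℝ} (ha : 0 < a) :
    Tendsto (fun t : ℝ => Real.exp (a * t)) atBot (𝓝 0) :=
  Real.tendsto_exp_atBot.comp (tendsto_id.const_mul_atBot ha)

variable {y : ℝ → ℂ} {z : ℂ}

lemma norm_eq_exp_mul_norm (y : ℝ → ℂ) (z : ℂ) (t : ℝ) :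
    ‖y t‖ = Real.exp (z.re * t) * ‖Complex.exp (-z * t) * y t‖ := by
  rw [norm_mul, norm_cexp_mul_ofReal, ← mul_assoc, ← Real.exp_add]
  simp

lemma tendsto_zero_atBot_of_re_pos (hy : Differentiable ℝ y) (hz : 0 < z.re)
    (hk : Tendsto (fun t => deriv y t - z * y t) atBot (𝓝 0)) : Tendsto y atBot (𝓝 0) := by
  rw [NormedAddGroup.tendsto_nhds_zero]
  intro ε hε
  obtain ⟨T, hT⟩ := exists_forall_le_norm_le hk (show 0 < ε / 2 * z.re by positivity)
  have h_small : Tendsto (fun s => Real.exp (z.re * s) * ‖Complex.exp (-z * T) * y T‖) atBot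
      (𝓝 0) := by
    simpa using (tendsto_exp_mul_atBot hz).mul_const ‖Complex.exp (-z * T) * y T‖
  filter_upwards [h_small.eventually_lt_const (half_pos hε), eventually_le_atBot T] with s hs hsT
  have h_diff := norm_cexp_neg_mul_sub_le hy hz.ne' hsT hT
  rw [mul_div_cancel_right₀ _ hz.ne'] at h_diff
  calc ‖y s‖ = Real.exp (z.re * s) * ‖Complex.exp (-z * s) * y s‖ := norm_eq_exp_mul_norm y z s
    _ ≤ Real.exp (z.re * s) * (‖Complex.exp (-z * T) * y T‖ + ε / 2 * Real.exp (-z.re * s)) := by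
        gcongr
        have := norm_sub_norm_le (Complex.exp (-z * s) * y s) (Complex.exp (-z * T) * y T)
        rw [norm_sub_rev] at this
        nlinarith [Real.exp_pos (-z.re * T)]
    _ = Real.exp (z.re * s) * ‖Complex.exp (-z * T) * y T‖ + ε / 2 := by
        rw [mul_add, mul_left_comm, ← Real.exp_add]
        simp
    _ < ε := by linarith

lemma tendsto_zero_atBot_of_re_neg (hy : Differentiable ℝ y) (hz : z.re < 0)
    (hk : Tendsto (fun t => deriv y t - z * y t) atBot (𝓝 0))
    (hw : Tendsto (fun t : ℝ => Complex.exp (-z * t) * y t) atBot (𝓝 0)) :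
    Tendsto y atBot (𝓝 0) := by
  rw [NormedAddGroup.tendsto_nhds_zero]
  intro ε hε
  obtain ⟨T, hT⟩ := exists_forall_le_norm_le hk (show 0 < ε / 2 * -z.re by nlinarith)
  filter_upwards [eventually_le_atBot T] with t ht
  have h_diff : ∀ᶠ s : ℝ in atBot, ‖Complex.exp (-z * t) * y t - Complex.exp (-z * s) * y s‖
      ≤ ε / 2 * -z.re / z.re * (Real.exp (-z.re * s) - Real.exp (-z.re * t)) := by
    filter_upwards [eventually_le_atBot t] with s hst
    exact norm_cexp_neg_mul_sub_le hy hz.ne hst fun r hr => hT r (hr.trans ht)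
  have h_lim := le_of_tendsto_of_tendsto (tendsto_const_nhds.sub hw).norm
    (((tendsto_exp_mul_atBot (neg_pos.2 hz)).sub_const _).const_mul _) h_diff
  calc ‖y t‖ = Real.exp (z.re * t) * ‖Complex.exp (-z * t) * y t‖ := norm_eq_exp_mul_norm y z t
    _ ≤ Real.exp (z.re * t) * (ε / 2 * Real.exp (-z.re * t)) := by
        gcongr
        refine (sub_zero (Complex.exp (-z * t) * y t) ▸ h_lim).trans_eq ?_
        field_simp [hz.ne]
        ring
    _ = ε / 2 := by
        rw [mul_left_comm, ← Real.exp_add]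
        simp
    _ < ε := half_lt_self hε

lemma tendsto_zero_atBot_of_le_abs_re {κ : ℝ} (hκ : 0 < κ) (hz : κ ≤ |z.re|)
    (hy : Differentiable ℝ y) (hk : Tendsto (fun t => deriv y t - z * y t) atBot (𝓝 0))
    (h_growth : Tendsto (fun t : ℝ => Complex.exp (κ * t) * y t) atBot (𝓝 0)) :
    Tendsto y atBot (𝓝 0) := by
  rcases le_abs.1 hz with hz | hz
  · exact tendsto_zero_atBot_of_re_pos hy (hκ.trans_le hz) hk
  · refine tendsto_zero_atBot_of_re_neg hy (by linarith) hk ?_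
    refine squeeze_zero_norm' ?_ (tendsto_zero_iff_norm_tendsto_zero.1 h_growth)
    filter_upwards [eventually_le_atBot 0] with t ht
    rw [norm_mul, norm_mul, norm_cexp_mul_ofReal, norm_cexp_mul_ofReal]
    gcongr ?_ * _
    exact Real.exp_le_exp.2 (mul_le_mul_of_nonpos_right hz ht)

/-- Peel off the factors `X - z` of `P` one at a time; `h_growth` rules out the solution `e^{zt}` of
`y' = z y` when `Re z < 0`. -/
theorem tendsto_zero_atBot_of_tendsto_diffOp {κ : ℝ} (hκ : 0 < κ) {P : ℂ[X]} (hP : P ≠ 0)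
    (h_roots : ∀ z, P.IsRoot z → κ ≤ |z.re|) {g : ℝ → ℂ} (hg : ContDiff ℝ ∞ g)
    (h_growth : ∀ Q, Tendsto (fun t : ℝ => Complex.exp (κ * t) * diffOp Q g t) atBot (𝓝 0))
    (h_diffOp : Tendsto (diffOp P g) atBot (𝓝 0)) : Tendsto g atBot (𝓝 0) := by
  induction hn : P.natDegree generalizing P with
  | zero =>
    obtain ⟨c, rfl⟩ := natDegree_eq_zero.1 hn
    have hc : c ≠ 0 := by simpa using hP
    simpa [hc] using h_diffOp.const_mul c⁻¹
  | succ n ih =>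
    obtain ⟨z, hz⟩ := IsAlgClosed.exists_root P fun h => by
      simp [natDegree_eq_zero_iff_degree_le_zero.2 h.le] at hn
    obtain ⟨R, rfl⟩ := dvd_iff_isRoot.2 hz
    have hR : R ≠ 0 := right_ne_zero_of_mul hP
    have h_deg : R.natDegree = n := by
      rw [natDegree_mul (X_sub_C_ne_zero z) hR, natDegree_X_sub_C] at hn
      lia
    refine ih hR (fun w hw => h_roots w (hw.dvd (dvd_mul_left _ _))) ?_ h_deg
    rw [diffOp_mul _ _ hg, diffOp_X_sub_C] at h_diffOp
    exact tendsto_zero_atBot_of_le_abs_re hκ (h_roots z hz)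
      ((contDiff_diffOp R hg).differentiable (by simp)) h_diffOp (h_growth R)

end Decay

section Smoothing

/-- Convolution of complex functions on the line. -/
abbrev conv (f ρ : ℝ → ℂ) : ℝ → ℂ := f ⋆[ContinuousLinearMap.mul ℝ ℂ, volume] ρ

lemma conv_apply (f ρ : ℝ → ℂ) (t : ℝ) : conv f ρ t = ∫ s, f s * ρ (t - s) := rfl

lemma conv_apply_swap (f ρ : ℝ → ℂ) (t : ℝ) : conv f ρ t = ∫ s, ρ s * f (t - s) := by
  simp [conv, convolution_eq_swap, mul_comm]

lemma integrable_mul_mul_comp_sub {f g ρ : ℝ → ℂ} (hf : LocallyIntegrable f) (hg : Continuous g)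
    (hgc : HasCompactSupport g) (hρ : Continuous ρ) (hρc : HasCompactSupport ρ) :
    Integrable fun p : ℝ × ℝ => g p.1 * (ρ p.2 * f (p.1 - p.2)) := by
  let K : Set ℝ := (fun p : ℝ × ℝ => p.1 - p.2) '' (tsupport g ×ˢ tsupport ρ)
  have hK : IsCompact K := (hgc.isCompact.prod hρc.isCompact).image (by fun_prop)
  have hfK : Integrable (K.indicator f) :=
    (hf.integrableOn_isCompact hK).integrable_indicator hK.measurableSet
  obtain ⟨M, hM⟩ := hg.bounded_above_of_compact_support hgc
  have h_int := ((hρ.integrable_of_hasCompactSupport (μ := volume) hρc).convolution_integrand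
    (ContinuousLinearMap.mul ℝ ℂ) hfK).bdd_mul (c := M) (f := fun p : ℝ × ℝ => g p.1)
    (hg.comp continuous_fst).aestronglyMeasurable (ae_of_all _ fun p => hM p.1)
  refine h_int.congr (ae_of_all _ fun ⟨t, s⟩ => ?_)
  by_cases ht : t ∈ tsupport g
  · by_cases hs : s ∈ tsupport ρ
    · simp [Set.indicator_of_mem (show t - s ∈ K from ⟨(t, s), ⟨ht, hs⟩, rfl⟩)]
    · simp [image_eq_zero_of_notMem_tsupport hs]
  · simp [image_eq_zero_of_notMem_tsupport ht]

/-- Translation by `s` on `L²(ℝ)`. -/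
def translateL2 (s : ℝ) (f : Lp ℂ 2 (volume : Measure ℝ)) : Lp ℂ 2 (volume : Measure ℝ) :=
  Lp.compMeasurePreserving (fun t => t - s) (measurePreserving_sub_right volume s) f

lemma coeFn_translateL2 (s : ℝ) (f : Lp ℂ 2 (volume : Measure ℝ)) :
    translateL2 s f =ᵐ[volume] fun t => f (t - s) :=
  Lp.coeFn_compMeasurePreserving _ _

lemma translateL2_zero (f : Lp ℂ 2 (volume : Measure ℝ)) : translateL2 0 f = f :=
  Lp.ext <| (coeFn_translateL2 0 f).trans <| by simp

lemma continuous_translateL2 (f : Lp ℂ 2 (volume : Measure ℝ)) :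
    Continuous fun s => translateL2 s f := by
  let S : ℝ → C(ℝ, ℝ) := fun s => ⟨fun t => t - s, by fun_prop⟩
  have hS : Continuous S := ContinuousMap.continuous_of_continuous_uncurry _
    (show Continuous fun p : ℝ × ℝ => p.2 - p.1 by fun_prop)
  exact continuous_const.compMeasurePreservingLp hS
    (fun s => measurePreserving_sub_right volume s) (by norm_num)

/-- The convolution `f ⋆ ρ` of `f ∈ L²(ℝ)`, as a superposition of translates in `L²(ℝ)`. -/
def smoothL2 (ρ : ℝ → ℂ) (f : Lp ℂ 2 (volume : Measure ℝ)) : Lp ℂ 2 (volume : Measure ℝ) :=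
  ∫ s, ρ s • translateL2 s f

variable {ρ : ℝ → ℂ}

lemma locallyIntegrable_Lp (f : Lp ℂ 2 (volume : Measure ℝ)) : LocallyIntegrable f :=
  (Lp.memLp f).locallyIntegrable (by norm_num)

lemma inner_smoothL2 (hρ : Continuous ρ) (hρc : HasCompactSupport ρ)
    (f v : Lp ℂ 2 (volume : Measure ℝ)) :
    inner ℂ v (smoothL2 ρ f) = ∫ s, ρ s * ∫ t, f (t - s) * conj (v t) := by
  have h_int : Integrable fun s => ρ s • translateL2 s f :=
    (hρ.smul (continuous_translateL2 f)).integrable_of_hasCompactSupport hρc.smul_right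
  rw [smoothL2, ← integral_inner h_int]
  refine integral_congr_ae (ae_of_all _ fun s => ?_)
  simp only [inner_smul_right, L2.inner_def, RCLike.inner_apply]
  congr 1
  refine integral_congr_ae ?_
  filter_upwards [coeFn_translateL2 s f] with t ht
  rw [ht]

/-- Both sides have the same pairing with test functions, by Fubini. -/
theorem coeFn_smoothL2 (hρ : Continuous ρ) (hρc : HasCompactSupport ρ)
    (f : Lp ℂ 2 (volume : Measure ℝ)) : smoothL2 ρ f =ᵐ[volume] conv f ρ := by
  refine ae_eq_of_integral_contDiff_smul_eq (locallyIntegrable_Lp _)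
    (hρc.continuous_convolution_right _ (locallyIntegrable_Lp f) hρ).locallyIntegrable
    fun g hg hgc => ?_
  let v : ℝ → ℂ := fun t => g t
  have hv : Continuous v := Complex.continuous_ofReal.comp hg.continuous
  have hvc : HasCompactSupport v := hgc.comp_left Complex.ofReal_zero
  have hv₂ : MemLp v 2 := hv.memLp_of_hasCompactSupport hvc
  have h_fubini := integral_integral_swap (f := fun t s => v t * (ρ s * f (t - s)))
    (integrable_mul_mul_comp_sub (locallyIntegrable_Lp f) hv hvc hρ hρc)
  calc ∫ t, g t • smoothL2 ρ f t = inner ℂ (hv₂.toLp v) (smoothL2 ρ f) := by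
        rw [L2.inner_def]
        refine integral_congr_ae ?_
        filter_upwards [hv₂.coeFn_toLp] with t ht
        simp [ht, v, mul_comm]
    _ = ∫ s, ∫ t, v t * (ρ s * f (t - s)) := by
        rw [inner_smoothL2 hρ hρc]
        refine integral_congr_ae (ae_of_all _ fun s => ?_)
        simp only [← integral_const_mul]
        refine integral_congr_ae ?_
        filter_upwards [hv₂.coeFn_toLp] with t ht
        simp only [ht, v, Complex.conj_ofReal]
        ring
    _ = ∫ t, g t • conv f ρ t := by
        rw [← h_fubini]
        simp only [integral_const_mul, conv_apply_swap, Complex.real_smul, v]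

/-- A sequence of bump functions at the origin, with shrinking supports. -/
def bumpSeq (n : ℕ) : ContDiffBump (0 : ℝ) where
  rIn := 1 / (n + 1) / 2
  rOut := 1 / (n + 1)
  rIn_pos := by positivity
  rIn_lt_rOut := half_lt_self (by positivity)

/-- A smooth approximate identity. -/
def mollifier (n : ℕ) : ℝ → ℂ := fun t => (bumpSeq n).normed volume t

lemma contDiff_mollifier (n : ℕ) : ContDiff ℝ ∞ (mollifier n) :=
  Complex.ofRealCLM.contDiff.comp (bumpSeq n).contDiff_normed

lemma hasCompactSupport_mollifier (n : ℕ) : HasCompactSupport (mollifier n) :=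
  (bumpSeq n).hasCompactSupport_normed.comp_left Complex.ofReal_zero

theorem tendsto_smoothL2_mollifier {w : ℝ → ℂ} (hw : Continuous w) (hw₀ : w 0 = 1)
    (f : Lp ℂ 2 (volume : Measure ℝ)) :
    Tendsto (fun n => smoothL2 (w * mollifier n) f) atTop (𝓝 f) := by
  have h_cont : Continuous fun s => w (-s) • translateL2 (-s) f :=
    ((hw.smul (continuous_translateL2 f)).comp continuous_neg)
  have h_lim := ContDiffBump.convolution_tendsto_right_of_continuous (μ := volume)
    (φ := bumpSeq) tendsto_one_div_add_atTop_nhds_zero_nat h_cont 0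
  simp only [neg_zero, hw₀, translateL2_zero, one_smul] at h_lim
  refine h_lim.congr fun n => integral_congr_ae (ae_of_all _ fun s => ?_)
  simp only [ContinuousLinearMap.lsmul_apply, zero_sub, neg_neg, Pi.mul_apply, mollifier]
  rw [mul_comm (w s), mul_smul, Complex.coe_smul]
  rfl

end Smoothing

section Convolution

variable {f ρ : ℝ → ℂ}

lemma contDiff_conv (hf : LocallyIntegrable f) (hρ : ContDiff ℝ ∞ ρ) (hρc : HasCompactSupport ρ) :
    ContDiff ℝ ∞ (conv f ρ) :=
  hρc.contDiff_convolution_right _ hf hρ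

lemma iteratedDeriv_conv (hf : LocallyIntegrable f) (hρ : ContDiff ℝ ∞ ρ)
    (hρc : HasCompactSupport ρ) (k : ℕ) :
    iteratedDeriv k (conv f ρ) = conv f (iteratedDeriv k ρ) := by
  induction k with
  | zero => simp
  | succ k ih =>
    have hρk : HasCompactSupport (iteratedDeriv k ρ) := by
      simpa only [diffOp_X_pow] using hasCompactSupport_diffOp (X ^ k) hρc
    ext t
    rw [iteratedDeriv_succ, ih, iteratedDeriv_succ]
    exact (hρk.hasDerivAt_convolution_right _ hf
      ((contDiff_iteratedDeriv hρ k).of_le (by simp)) t).deriv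

lemma diffOp_conv (P : ℂ[X]) (hf : LocallyIntegrable f) (hρ : ContDiff ℝ ∞ ρ)
    (hρc : HasCompactSupport ρ) : diffOp P (conv f ρ) = conv f (diffOp P ρ) := by
  induction P using Polynomial.induction_on' with
  | add P Q hP hQ =>
    have h_exists (R : ℂ[X]) : ConvolutionExists f (diffOp R ρ) (ContinuousLinearMap.mul ℝ ℂ) :=
      (hasCompactSupport_diffOp R hρc).convolutionExists_right _ hf
        (contDiff_diffOp R hρ).continuous
    rw [diffOp_add, diffOp_add, hP, hQ]
    exact ((h_exists P).distrib_add (h_exists Q)).symm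
  | monomial k c =>
    rw [diffOp_monomial, diffOp_monomial, iteratedDeriv_conv hf hρ hρc]
    ext t
    simp only [conv_apply, mul_left_comm _ c, integral_const_mul]

lemma conv_cexp_mul (c : ℂ) (f ρ : ℝ → ℂ) (t : ℝ) :
    conv (fun s => Complex.exp (c * s) * f s) ρ t
      = Complex.exp (c * t) * conv f (fun s => Complex.exp (-c * s) * ρ s) t := by
  simp only [conv_apply, ← integral_const_mul]
  refine integral_congr_ae (ae_of_all _ fun s => ?_)
  beta_reduce
  rw [mul_left_comm (f s), ← mul_assoc (Complex.exp (c * t)), ← Complex.exp_add, ← mul_assoc]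
  congr 3
  push_cast
  ring

lemma locallyIntegrable_cexp_mul (c : ℂ) (hf : LocallyIntegrable f) :
    LocallyIntegrable fun s : ℝ => Complex.exp (c * s) * f s :=
  locallyIntegrableOn_univ.1 <| (locallyIntegrableOn_univ.2 hf).continuousOn_mul
    (contDiff_cexp_mul c).continuous.continuousOn isOpen_univ.isLocallyClosed

lemma integrable_mul_conj {g h : ℝ → ℂ} (hg : MemLp g 2) (hh : MemLp h 2) :
    Integrable fun t => g t * conj (h t) :=
  hg.integrable_mul hh.star

lemma tendsto_cocompact_of_memLp_deriv {g : ℝ → ℂ} (hg : Differentiable ℝ g) (hg₂ : MemLp g 2)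
    (hg₂' : MemLp (deriv g) 2) : Tendsto g (cocompact ℝ) (𝓝 0) := by
  let F : ℝ → ℂ := fun t => g t * conj (g t)
  have hF (t : ℝ) : HasDerivAt F (deriv g t * conj (g t) + g t * conj (deriv g t)) t :=
    (hg t).hasDerivAt.mul (hg t).hasDerivAt.star
  have hF_int : Integrable F := integrable_mul_conj hg₂ hg₂
  have hF'_int := (integrable_mul_conj hg₂' hg₂).add (integrable_mul_conj hg₂ hg₂')
  have hF_lim : Tendsto F (cocompact ℝ) (𝓝 0) := by
    rw [cocompact_eq_atBot_atTop]
    exact (tendsto_zero_of_hasDerivAt_of_integrableOn_Iic (a := 0) (fun t _ => hF t)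
      hF'_int.integrableOn hF_int.integrableOn).sup
      (tendsto_zero_of_hasDerivAt_of_integrableOn_Ioi (a := 0) (fun t _ => hF t)
        hF'_int.integrableOn hF_int.integrableOn)
  have h_norm := (tendsto_zero_iff_norm_tendsto_zero.1 hF_lim).sqrt
  refine tendsto_zero_iff_norm_tendsto_zero.2 ?_
  simpa [F] using h_norm

lemma memLp_conv (hρ : Continuous ρ) (hρc : HasCompactSupport ρ)
    (x : Lp ℂ 2 (volume : Measure ℝ)) : MemLp (conv x ρ) 2 :=
  (memLp_congr_ae (coeFn_smoothL2 hρ hρc x)).1 (Lp.memLp _)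

lemma tendsto_conv_cocompact (hρ : ContDiff ℝ ∞ ρ) (hρc : HasCompactSupport ρ)
    (x : Lp ℂ 2 (volume : Measure ℝ)) : Tendsto (conv x ρ) (cocompact ℝ) (𝓝 0) := by
  have h_loc := locallyIntegrable_Lp x
  refine tendsto_cocompact_of_memLp_deriv ((contDiff_conv h_loc hρ hρc).differentiable (by simp))
    (memLp_conv hρ.continuous hρc x) ?_
  rw [← diffOp_X, diffOp_conv X h_loc hρ hρc]
  exact memLp_conv (contDiff_diffOp X hρ).continuous (hasCompactSupport_diffOp X hρc) x

lemma inner_smoothL2_smoothL2 {ρ₁ ρ₂ : ℝ → ℂ} (hρ₁ : Continuous ρ₁) (hρ₁c : HasCompactSupport ρ₁)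
    (hρ₂ : Continuous ρ₂) (hρ₂c : HasCompactSupport ρ₂) (x y : Lp ℂ 2 (volume : Measure ℝ)) :
    inner ℂ (smoothL2 ρ₁ x) (smoothL2 ρ₂ y) = ∫ t, conv y ρ₂ t * conj (conv x ρ₁ t) := by
  rw [L2.inner_def]
  refine integral_congr_ae ?_
  filter_upwards [coeFn_smoothL2 hρ₁ hρ₁c x, coeFn_smoothL2 hρ₂ hρ₂c y] with t h₁ h₂
  rw [h₁, h₂, RCLike.inner_apply]

end Convolution

section WeightedOperator

/-- The graph of the operator `e^{-κt} P(D) e^{-κt}` in `L²(ℝ)` with domain `C₀^∞(ℝ)`, whose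
elements are parametrized as `u = e^{κt} ψ`. -/
def weightedGraph (κ : ℝ) (P : ℂ[X]) :
    Submodule ℂ (Lp ℂ 2 (volume : Measure ℝ) × Lp ℂ 2 (volume : Measure ℝ)) :=
  Submodule.span ℂ {p | ∃ ψ : ℝ → ℂ, ContDiff ℝ ∞ ψ ∧ HasCompactSupport ψ ∧
    (p.1 =ᵐ[volume] fun t => Complex.exp (κ * t) * ψ t) ∧
    p.2 =ᵐ[volume] fun t => Complex.exp (-κ * t) * diffOp P ψ t}

variable {κ : ℝ} {P : ℂ[X]} {x y : Lp ℂ 2 (volume : Measure ℝ) × Lp ℂ 2 (volume : Measure ℝ)}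
  {ρ : ℝ → ℂ}

lemma inner_of_ae_eq_cexp_mul {c : ℂ} (hc : conj c = c) {u v : Lp ℂ 2 (volume : Measure ℝ)}
    {ψ : ℝ → ℂ} (hu : u =ᵐ[volume] fun t => Complex.exp (c * t) * ψ t) :
    inner ℂ u v = ∫ t : ℝ, Complex.exp (c * t) * v t * conj (ψ t) := by
  rw [L2.inner_def]
  refine integral_congr_ae ?_
  filter_upwards [hu] with t ht
  rw [ht, RCLike.inner_apply, map_mul, ← Complex.exp_conj, map_mul, hc, Complex.conj_ofReal]
  ring

lemma memLp_cexp_mul (c : ℂ) {ψ : ℝ → ℂ} (hψ : Continuous ψ) (hψc : HasCompactSupport ψ) :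
    MemLp (fun t : ℝ => Complex.exp (c * t) * ψ t) 2 :=
  ((contDiff_cexp_mul c).continuous.mul hψ).memLp_of_hasCompactSupport hψc.mul_left

lemma exists_mem_weightedGraph (κ : ℝ) (P : ℂ[X]) {ψ : ℝ → ℂ} (hψ : ContDiff ℝ ∞ ψ)
    (hψc : HasCompactSupport ψ) : ∃ p ∈ weightedGraph κ P,
      (p.1 =ᵐ[volume] fun t => Complex.exp (κ * t) * ψ t) ∧
      p.2 =ᵐ[volume] fun t => Complex.exp (-κ * t) * diffOp P ψ t := by
  have h₁ := memLp_cexp_mul κ hψ.continuous hψc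
  have h₂ := memLp_cexp_mul (-κ) (contDiff_diffOp P hψ).continuous (hasCompactSupport_diffOp P hψc)
  exact ⟨(h₁.toLp _, h₂.toLp _), Submodule.subset_span
    ⟨ψ, hψ, hψc, h₁.coeFn_toLp, h₂.coeFn_toLp⟩, h₁.coeFn_toLp, h₂.coeFn_toLp⟩

lemma mem_adjoint_weightedGraph_iff : x ∈ (weightedGraph κ P).adjoint ↔
    ∀ ψ, ContDiff ℝ ∞ ψ → HasCompactSupport ψ →
      ∫ t : ℝ, Complex.exp (-κ * t) * x.1 t * conj (diffOp P ψ t)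
        = ∫ t : ℝ, Complex.exp (κ * t) * x.2 t * conj (ψ t) := by
  have hκ : conj (κ : ℂ) = κ := Complex.conj_ofReal κ
  have hκ' : conj (-κ : ℂ) = -κ := by rw [map_neg, hκ]
  constructor
  · intro hx ψ hψ hψc
    obtain ⟨p, hp, hp₁, hp₂⟩ := exists_mem_weightedGraph κ P hψ hψc
    rw [← inner_of_ae_eq_cexp_mul hκ' hp₂, ← inner_of_ae_eq_cexp_mul hκ hp₁]
    exact mem_adjoint_iff_inner.1 hx p hp
  · rintro h
    refine mem_adjoint_span_iff.2 fun p ⟨ψ, hψ, hψc, hp₁, hp₂⟩ => ?_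
    rw [inner_of_ae_eq_cexp_mul hκ hp₁, inner_of_ae_eq_cexp_mul hκ' hp₂]
    exact h ψ hψ hψc

lemma dense_map_fst_weightedGraph (κ : ℝ) (P : ℂ[X]) :
    Dense ((weightedGraph κ P).map (LinearMap.fst ℂ _ _) : Set (Lp ℂ 2 (volume : Measure ℝ))) := by
  refine (Lp.dense_hasCompactSupport_contDiff (by norm_num)).mono ?_
  rintro f ⟨g, hf, hgc, hg⟩
  obtain ⟨p, hp, hp₁, -⟩ := exists_mem_weightedGraph κ P
    (ψ := fun t => Complex.exp (-κ * t) * g t) ((contDiff_cexp_mul _).mul hg) hgc.mul_left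
  refine ⟨p, hp, Lp.ext ?_⟩
  filter_upwards [hf, hp₁] with t hft hpt
  rw [LinearMap.fst_apply, hpt, hft, ← mul_assoc, ← Complex.exp_add]
  simp

lemma mem_adjoint_weightedGraph_of_contDiff (hP : formalAdjoint P = P) {g : ℝ → ℂ}
    (hg : ContDiff ℝ ∞ g) (hx₁ : x.1 =ᵐ[volume] fun t => Complex.exp (κ * t) * g t)
    (hx₂ : x.2 =ᵐ[volume] fun t => Complex.exp (-κ * t) * diffOp P g t) :
    x ∈ (weightedGraph κ P).adjoint := by
  refine mem_adjoint_weightedGraph_iff.2 fun ψ hψ hψc => ?_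
  calc ∫ t : ℝ, Complex.exp (-κ * t) * x.1 t * conj (diffOp P ψ t)
      = ∫ t, g t * conj (diffOp (formalAdjoint P) ψ t) := by
        refine integral_congr_ae ?_
        filter_upwards [hx₁] with t ht
        rw [ht, hP, ← mul_assoc, ← Complex.exp_add]
        simp
    _ = ∫ t, diffOp P g t * conj (ψ t) := (integral_diffOp_mul_conj P hg hψ hψc).symm
    _ = ∫ t : ℝ, Complex.exp (κ * t) * x.2 t * conj (ψ t) := by
        refine integral_congr_ae ?_
        filter_upwards [hx₂] with t ht
        rw [ht, ← mul_assoc, ← Complex.exp_add]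
        simp

lemma weightedGraph_le_adjoint (κ : ℝ) (hP : formalAdjoint P = P) :
    weightedGraph κ P ≤ (weightedGraph κ P).adjoint :=
  Submodule.span_le.2 fun _ ⟨_, hψ, _, hp₁, hp₂⟩ =>
    mem_adjoint_weightedGraph_of_contDiff hP hψ hp₁ hp₂

lemma diffOp_conv_of_mem_adjoint (hx : x ∈ (weightedGraph κ P).adjoint) (hρ : ContDiff ℝ ∞ ρ)
    (hρc : HasCompactSupport ρ) :
    diffOp (formalAdjoint P) (conv (fun t => Complex.exp (-κ * t) * x.1 t) ρ)
      = conv (fun t => Complex.exp (κ * t) * x.2 t) ρ := by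
  rw [diffOp_conv _ (locallyIntegrable_cexp_mul _ (locallyIntegrable_Lp _)) hρ hρc]
  ext t
  have h := mem_adjoint_weightedGraph_iff.1 hx (fun s => conj (ρ (t - s)))
    (Complex.conjCLE.contDiff.comp (hρ.comp (contDiff_const.sub contDiff_id)))
    ((hρc.comp_homeomorph (Homeomorph.subLeft t)).comp_left (map_zero _))
  simpa only [diffOp_conj_comp_sub, Complex.conj_conj, conv_apply] using h

lemma norm_cexp_mul_mul_le {c : ℂ} {t : ℝ} (h : c.re * t ≤ 0) (w : ℂ) :
    ‖Complex.exp (c * t) * w‖ ≤ ‖w‖ := by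
  rw [norm_mul, norm_cexp_mul_ofReal]
  exact mul_le_of_le_one_left (norm_nonneg w) (Real.exp_le_one_iff.2 h)

lemma tendsto_cexp_mul_diffOp_conv (κ : ℝ) (f : Lp ℂ 2 (volume : Measure ℝ))
    (hρ : ContDiff ℝ ∞ ρ) (hρc : HasCompactSupport ρ) (Q : ℂ[X]) :
    Tendsto (fun t : ℝ => Complex.exp (κ * t)
      * diffOp Q (conv (fun t => Complex.exp (-κ * t) * f t) ρ) t) (cocompact ℝ) (𝓝 0) := by
  refine (tendsto_conv_cocompact ((contDiff_cexp_mul κ).mul (contDiff_diffOp Q hρ))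
    (hasCompactSupport_diffOp Q hρc).mul_left f).congr fun t => ?_
  rw [diffOp_conv Q (locallyIntegrable_cexp_mul (-κ) (locallyIntegrable_Lp f)) hρ hρc,
    conv_cexp_mul, ← mul_assoc, ← Complex.exp_add, neg_neg]
  simp

lemma tendsto_conv_of_mem_adjoint (hP : formalAdjoint P = P) (hP₀ : P ≠ 0) (hκ : 0 < κ)
    (h_roots : ∀ z, P.IsRoot z → κ ≤ |z.re|) (hx : x ∈ (weightedGraph κ P).adjoint)
    (hρ : ContDiff ℝ ∞ ρ) (hρc : HasCompactSupport ρ) :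
    Tendsto (conv (fun t => Complex.exp (-κ * t) * x.1 t) ρ) (cocompact ℝ) (𝓝 0) := by
  have h_loc := locallyIntegrable_cexp_mul (-κ) (locallyIntegrable_Lp x.1)
  have h_growth := tendsto_cexp_mul_diffOp_conv κ x.1 hρ hρc
  have h_diffOp : Tendsto (diffOp P (conv (fun t => Complex.exp (-κ * t) * x.1 t) ρ)) atBot
      (𝓝 0) := by
    have h_conv := (tendsto_conv_cocompact ((contDiff_cexp_mul (-κ)).mul hρ) hρc.mul_left
      x.2).mono_left atBot_le_cocompact
    have h_eq := diffOp_conv_of_mem_adjoint hx hρ hρc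
    rw [hP] at h_eq
    rw [h_eq, funext fun t => conv_cexp_mul κ x.2 ρ t]
    refine squeeze_zero_norm' ?_ (tendsto_zero_iff_norm_tendsto_zero.1 h_conv)
    filter_upwards [eventually_le_atBot 0] with t ht
    exact norm_cexp_mul_mul_le (mul_nonpos_of_nonneg_of_nonpos hκ.le ht) _
  rw [cocompact_eq_atBot_atTop]
  refine (tendsto_zero_atBot_of_tendsto_diffOp hκ hP₀ h_roots (contDiff_conv h_loc hρ hρc)
    (fun Q => (h_growth Q).mono_left atBot_le_cocompact) h_diffOp).sup ?_
  have h_growth_one := h_growth (C 1)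
  simp only [diffOp_C, one_mul] at h_growth_one
  refine squeeze_zero_norm' ?_
    (tendsto_zero_iff_norm_tendsto_zero.1 (h_growth_one.mono_left atTop_le_cocompact))
  filter_upwards [eventually_ge_atTop 0] with t ht
  have h_le := norm_cexp_mul_mul_le (c := -κ) (t := t) (by simpa using mul_nonneg hκ.le ht)
    (Complex.exp (κ * t) * conv (fun t => Complex.exp (-κ * t) * x.1 t) ρ t)
  rw [← mul_assoc, ← Complex.exp_add] at h_le
  simpa using h_le

lemma tendsto_iteratedDeriv_conv_of_mem_adjoint (hP : formalAdjoint P = P) (hP₀ : P ≠ 0)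
    (hκ : 0 < κ) (h_roots : ∀ z, P.IsRoot z → κ ≤ |z.re|) (hx : x ∈ (weightedGraph κ P).adjoint)
    (hρ : ContDiff ℝ ∞ ρ) (hρc : HasCompactSupport ρ) (k : ℕ) :
    Tendsto (iteratedDeriv k (conv (fun t => Complex.exp (-κ * t) * x.1 t) ρ))
      (cocompact ℝ) (𝓝 0) := by
  rw [← diffOp_X_pow, diffOp_conv _ (locallyIntegrable_cexp_mul _ (locallyIntegrable_Lp _)) hρ hρc]
  exact tendsto_conv_of_mem_adjoint hP hP₀ hκ h_roots hx (contDiff_diffOp _ hρ)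
    (hasCompactSupport_diffOp _ hρc)

lemma conv_mul_conj_conv_of_mem_adjoint (hP : formalAdjoint P = P)
    (hx : x ∈ (weightedGraph κ P).adjoint) (hρ : ContDiff ℝ ∞ ρ) (hρc : HasCompactSupport ρ)
    (f : ℝ → ℂ) (t : ℝ) :
    conv x.2 (fun s => Complex.exp (-κ * s) * ρ s) t
        * conj (conv f (fun s => Complex.exp (κ * s) * ρ s) t)
      = diffOp P (conv (fun t => Complex.exp (-κ * t) * x.1 t) ρ) t
        * conj (conv (fun t => Complex.exp (-κ * t) * f t) ρ t) := by
  have h_diffOp := diffOp_conv_of_mem_adjoint hx hρ hρc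
  rw [hP] at h_diffOp
  have h_one : Complex.exp (κ * t) * Complex.exp (-κ * t) = 1 := by simp [← Complex.exp_add]
  rw [h_diffOp, conv_cexp_mul, conv_cexp_mul, neg_neg, map_mul, ← Complex.exp_conj]
  simp only [map_mul, map_neg, Complex.conj_ofReal]
  linear_combination (-conv x.2 (fun s => Complex.exp (-κ * s) * ρ s) t
    * conj (conv f (fun s => Complex.exp (κ * s) * ρ s) t)) * h_one

/-- Lagrange's identity for the mollified functions; the boundary terms vanish. -/
lemma inner_smoothL2_of_mem_adjoint (hP : formalAdjoint P = P) (hP₀ : P ≠ 0)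
    (hκ : 0 < κ) (h_roots : ∀ z, P.IsRoot z → κ ≤ |z.re|) (hx : x ∈ (weightedGraph κ P).adjoint)
    (hy : y ∈ (weightedGraph κ P).adjoint) (hρ : ContDiff ℝ ∞ ρ) (hρc : HasCompactSupport ρ) :
    inner ℂ (smoothL2 (fun s => Complex.exp (κ * s) * ρ s) y.1)
        (smoothL2 (fun s => Complex.exp (-κ * s) * ρ s) x.2)
      = inner ℂ (smoothL2 (fun s => Complex.exp (-κ * s) * ρ s) y.2)
        (smoothL2 (fun s => Complex.exp (κ * s) * ρ s) x.1) := by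
  have hw (c : ℂ) : Continuous fun s : ℝ => Complex.exp (c * s) * ρ s :=
    (contDiff_cexp_mul c).continuous.mul hρ.continuous
  have hwc (c : ℂ) : HasCompactSupport fun s : ℝ => Complex.exp (c * s) * ρ s := hρc.mul_left
  have h_smooth (u : Lp ℂ 2 (volume : Measure ℝ)) :
      ContDiff ℝ ∞ (conv (fun t => Complex.exp (-κ * t) * u t) ρ) :=
    contDiff_conv (locallyIntegrable_cexp_mul _ (locallyIntegrable_Lp u)) hρ hρc
  have h_int (c d : ℂ) (u v : Lp ℂ 2 (volume : Measure ℝ)) :=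
    integrable_mul_conj (memLp_conv (hw c) (hwc c) u) (memLp_conv (hw d) (hwc d) v)
  have h_left := funext (conv_mul_conj_conv_of_mem_adjoint hP hx hρ hρc y.1)
  have h_right : (fun t => conv x.1 (fun s => Complex.exp (κ * s) * ρ s) t
        * conj (conv y.2 (fun s => Complex.exp (-κ * s) * ρ s) t))
      = fun t => conv (fun t => Complex.exp (-κ * t) * x.1 t) ρ t
        * conj (diffOp P (conv (fun t => Complex.exp (-κ * t) * y.1 t) ρ) t) := by
    ext t
    simpa [mul_comm] using congrArg conj (conv_mul_conj_conv_of_mem_adjoint hP hy hρ hρc x.1 t)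
  have h_int₁ := h_int (-κ) κ x.2 y.1
  have h_int₂ := h_int κ (-κ) x.1 y.2
  have h_lim := tendsto_lagrangeForm P
    (tendsto_iteratedDeriv_conv_of_mem_adjoint hP hP₀ hκ h_roots hx hρ hρc)
    (tendsto_iteratedDeriv_conv_of_mem_adjoint hP hP₀ hκ h_roots hy hρ hρc)
  rw [inner_smoothL2_smoothL2 (hw κ) (hwc κ) (hw (-κ)) (hwc (-κ)),
    inner_smoothL2_smoothL2 (hw (-κ)) (hwc (-κ)) (hw κ) (hwc κ), h_left, h_right]
  rw [h_left] at h_int₁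
  rw [h_right] at h_int₂
  have h_lagrange := integral_diffOp_mul_conj_sub P (h_smooth x.1) (h_smooth y.1)
    (h_lim.mono_left atBot_le_cocompact) (h_lim.mono_left atTop_le_cocompact) h_int₁ (by rwa [hP])
  rw [hP, sub_zero] at h_lagrange
  exact sub_eq_zero.1 h_lagrange

theorem adjoint_weightedGraph_le (hP : formalAdjoint P = P) (hP₀ : P ≠ 0) (hκ : 0 < κ)
    (h_roots : ∀ z, P.IsRoot z → κ ≤ |z.re|) :
    (weightedGraph κ P).adjoint ≤ (weightedGraph κ P).adjoint.adjoint := by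
  refine fun x hx => mem_adjoint_iff_inner.2 fun y hy => ?_
  have h_lim (c : ℂ) (f : Lp ℂ 2 (volume : Measure ℝ)) : Tendsto
      (fun n => smoothL2 (fun s => Complex.exp (c * s) * mollifier n s) f) atTop (𝓝 f) :=
    tendsto_smoothL2_mollifier (contDiff_cexp_mul c).continuous (by simp) f
  refine tendsto_nhds_unique ((h_lim (-κ) y.2).inner (h_lim κ x.1)) ?_
  refine ((h_lim κ y.1).inner (h_lim (-κ) x.2)).congr fun n => ?_
  exact inner_smoothL2_of_mem_adjoint hP hP₀ hκ h_roots hx hy (contDiff_mollifier n)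
    (hasCompactSupport_mollifier n)

end WeightedOperator

section CutoffExponentials

/-- The function `t ^ n e^{wt}` cut off smoothly to the left half-line: unchanged on `(-∞, -1]`
and zero on `[0, ∞)`. -/
def cutExp (n : ℕ) (w : ℂ) : ℝ → ℂ := fun t =>
  (Real.smoothTransition (-t) : ℂ) * ((t : ℂ) ^ n * Complex.exp (w * t))

variable {P S : ℂ[X]} {n : ℕ} {w z : ℂ}

lemma contDiff_cutExp (n : ℕ) (w : ℂ) : ContDiff ℝ ∞ (cutExp n w) :=
  (Complex.ofRealCLM.contDiff.comp (Real.smoothTransition.contDiff.comp contDiff_neg)).mul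
    (contDiff_pow_mul_cexp n w)

lemma cutExp_eqOn_Iio (n : ℕ) (w : ℂ) :
    (Set.Iio (-1)).EqOn (cutExp n w) fun t => (t : ℂ) ^ n * Complex.exp (w * t) := fun t ht => by
  have h_one : Real.smoothTransition (-t) = 1 :=
    Real.smoothTransition.one_of_one_le (le_neg_of_le_neg (Set.mem_Iio.1 ht).le)
  simp [cutExp, h_one]

lemma cutExp_eqOn_Ioi (n : ℕ) (w : ℂ) : (Set.Ioi 0).EqOn (cutExp n w) 0 := fun t ht => by
  have h_zero : Real.smoothTransition (-t) = 0 :=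
    Real.smoothTransition.zero_of_nonpos (neg_nonpos.2 (Set.mem_Ioi.1 ht).le)
  simp [cutExp, h_zero]

lemma cexp_mul_cutExp (c : ℂ) (n : ℕ) (w : ℂ) (t : ℝ) :
    Complex.exp (c * t) * cutExp n w t = cutExp n (c + w) t := by
  simp only [cutExp, add_mul, Complex.exp_add]
  ring

lemma isBigO_norm_cutExp_sq (hw : 0 < w.re) (n : ℕ) :
    (fun t => ‖cutExp n w t‖ ^ 2) =O[atBot] fun t => Real.exp (w.re * t) := by
  have h_pow := ((isLittleO_pow_exp_pos_mul_atTop (2 * n) hw).comp_tendsto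
    tendsto_neg_atBot_atTop).isBigO.mul
    (Asymptotics.isBigO_refl (fun t : ℝ => Real.exp (2 * w.re * t)) atBot)
  refine (Asymptotics.isBigO_of_le _ fun t => ?_).trans (h_pow.congr_right fun t => ?_)
  · have h_le : ‖cutExp n w t‖ ≤ |t| ^ n * Real.exp (w.re * t) := by
      rw [cutExp, norm_mul, norm_mul, norm_cexp_mul_ofReal, norm_pow, Complex.norm_real,
        Complex.norm_real, Real.norm_of_nonneg (Real.smoothTransition.nonneg _), Real.norm_eq_abs]
      exact mul_le_of_le_one_left (by positivity) (Real.smoothTransition.le_one _)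
    calc ‖‖cutExp n w t‖ ^ 2‖ ≤ (|t| ^ n * Real.exp (w.re * t)) ^ 2 := by
          rw [norm_pow, norm_norm]
          gcongr
      _ = _ := by
          simp only [Function.comp_apply, norm_mul, norm_pow, norm_neg, Real.norm_eq_abs,
            Real.abs_exp, mul_pow, ← pow_mul, ← Real.exp_nat_mul]
          push_cast
          ring_nf
  · rw [Function.comp_apply, ← Real.exp_add]
    ring_nf

lemma memLp_cutExp (hw : 0 < w.re) (n : ℕ) : MemLp (cutExp n w) 2 := by
  have h_cont := (contDiff_cutExp n w).continuous
  rw [memLp_two_iff_integrable_sq_norm h_cont.aestronglyMeasurable]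
  have h_top : (fun t => ‖cutExp n w t‖ ^ 2) =ᶠ[atTop] 0 := by
    filter_upwards [eventually_gt_atTop 0] with t ht
    simp [cutExp_eqOn_Ioi n w ht]
  exact (h_cont.norm.pow 2).locallyIntegrable.integrable_of_isBigO_atBot_atTop
    (isBigO_norm_cutExp_sq hw n) ⟨_, Iic_mem_atBot 0, integrableOn_exp_mul_Iic hw 0⟩
    h_top.isBigO ((integrable_zero ℝ ℝ volume).integrableAtFilter _)

lemma diffOp_zero_right (P : ℂ[X]) : diffOp P 0 = 0 := by
  ext t
  simp [diffOp, Polynomial.sum]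

lemma diffOp_pow_mul_cexp_eq_zero (h : (X - C w) ^ (n + 1) ∣ P) :
    diffOp P (fun t : ℝ => (t : ℂ) ^ n * Complex.exp (w * t)) = 0 := by
  obtain ⟨Q, rfl⟩ := h
  have h_smooth := contDiff_pow_mul_cexp n w
  rw [mul_comm, pow_succ', diffOp_mul _ _ h_smooth, diffOp_mul _ _ h_smooth, diffOp_X_sub_C_pow,
    ← diffOp_zero_right Q]
  congr 1
  ext t
  have h_deriv := ((hasDerivAt_cexp_mul w t).const_mul (n.factorial : ℂ)).deriv
  simp only [diffOp_X_sub_C, h_deriv, Pi.zero_apply]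
  ring

lemma hasCompactSupport_diffOp_cutExp (h : (X - C w) ^ (n + 1) ∣ P) :
    HasCompactSupport (diffOp P (cutExp n w)) := by
  refine HasCompactSupport.intro (isCompact_Icc (a := -1) (b := 0)) fun t ht => ?_
  rw [Set.mem_Icc, not_and_or, not_le, not_le] at ht
  rcases ht with ht | ht
  · rw [diffOp_eqOn P isOpen_Iio (cutExp_eqOn_Iio n w) ht, diffOp_pow_mul_cexp_eq_zero h]
    rfl
  · rw [diffOp_eqOn P isOpen_Ioi (cutExp_eqOn_Ioi n w) ht, diffOp_zero_right]
    rfl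

lemma X_sub_C_pow_dvd_formalAdjoint (h : (X - C z) ^ n ∣ P) :
    (X - C (-conj z)) ^ n ∣ formalAdjoint P := by
  obtain ⟨S, rfl⟩ := h
  rw [formalAdjoint_mul, formalAdjoint_pow, formalAdjoint_X_sub_C, mul_pow, mul_assoc]
  exact dvd_mul_of_dvd_right (dvd_mul_right _ _) _

lemma lagrangeForm_cexp_pow_mul_cexp (z : ℂ) (n : ℕ) (S : ℂ[X]) :
    lagrangeForm ((X - C z) ^ (n + 1) * S) (fun t : ℝ => Complex.exp (z * t))
      (fun t : ℝ => (t : ℂ) ^ n * Complex.exp (-conj z * t))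
      = fun _ => (-1) ^ n * n.factorial * S.eval z := by
  have h_adjoint : formalAdjoint ((X - C z) ^ n * S)
      = C ((-1) ^ n) * (formalAdjoint S * (X - C (-conj z)) ^ n) := by
    rw [formalAdjoint_mul, formalAdjoint_pow, formalAdjoint_X_sub_C, mul_pow, ← C_pow]
    ring
  ext t
  rw [pow_succ', mul_assoc, lagrangeForm_X_sub_C_mul_cexp, h_adjoint, diffOp_C_mul,
    diffOp_mul _ _ (contDiff_pow_mul_cexp n _), diffOp_X_sub_C_pow,
    ← diffOp_C (n.factorial : ℂ), ← diffOp_mul _ _ (contDiff_cexp_mul _), diffOp_cexp_mul, eval_mul,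
    eval_C, eval_formalAdjoint]
  simp only [map_mul, map_neg, map_pow, map_one, map_natCast, Complex.conj_conj,
    Complex.conj_ofReal, neg_neg, ← Complex.exp_conj]
  have h_one : Complex.exp (z * t) * Complex.exp (-z * t) = 1 := by simp [← Complex.exp_add]
  linear_combination ((-1) ^ n * n.factorial * S.eval z) * h_one

lemma tendsto_lagrangeForm_cutExp_atBot (z : ℂ) (n : ℕ) (S : ℂ[X]) :
    Tendsto (lagrangeForm ((X - C z) ^ (n + 1) * S) (cutExp 0 z) (cutExp n (-conj z))) atBot
      (𝓝 ((-1) ^ n * n.factorial * S.eval z)) := by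
  refine tendsto_const_nhds.congr' ?_
  filter_upwards [eventually_lt_atBot (-1)] with t ht
  rw [lagrangeForm_eqOn _ isOpen_Iio (cutExp_eqOn_Iio 0 z) (cutExp_eqOn_Iio n _) ht]
  simp only [pow_zero, one_mul, lagrangeForm_cexp_pow_mul_cexp]

lemma tendsto_lagrangeForm_cutExp_atTop (P : ℂ[X]) (w z : ℂ) (m n : ℕ) :
    Tendsto (lagrangeForm P (cutExp m z) (cutExp n w)) atTop (𝓝 0) := by
  refine tendsto_const_nhds.congr' ?_
  filter_upwards [eventually_gt_atTop 0] with t ht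
  rw [lagrangeForm_eqOn _ isOpen_Ioi (cutExp_eqOn_Ioi m z) (cutExp_eqOn_Ioi n w) ht]
  simp [lagrangeForm, Polynomial.sum]

lemma integral_diffOp_cutExp_mul_conj_sub (z : ℂ) (n : ℕ) (hP : P = (X - C z) ^ (n + 1) * S) :
    (∫ t, diffOp P (cutExp 0 z) t * conj (cutExp n (-conj z) t))
        - ∫ t, cutExp 0 z t * conj (diffOp (formalAdjoint P) (cutExp n (-conj z)) t)
      = -((-1) ^ n * n.factorial * S.eval z) := by
  have hg := contDiff_cutExp 0 z
  have hh := contDiff_cutExp n (-conj z)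
  have h_dvd : (X - C z) ^ (n + 1) ∣ P := ⟨S, hP⟩
  have hgc := hasCompactSupport_diffOp_cutExp ((pow_dvd_pow _ (by simp)).trans h_dvd) (n := 0)
  have hhc := hasCompactSupport_diffOp_cutExp (X_sub_C_pow_dvd_formalAdjoint h_dvd)
  rw [integral_diffOp_mul_conj_sub P hg hh (hP ▸ tendsto_lagrangeForm_cutExp_atBot z n S)
    (tendsto_lagrangeForm_cutExp_atTop P _ _ _ _), zero_sub]
  · exact ((contDiff_diffOp P hg).continuous.mul
      (Complex.continuous_conj.comp hh.continuous)).integrable_of_hasCompactSupport hgc.mul_right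
  · exact (hg.continuous.mul (Complex.continuous_conj.comp
      (contDiff_diffOp _ hh).continuous)).integrable_of_hasCompactSupport
      (hhc.comp_left (map_zero conj)).mul_left

lemma exists_mem_adjoint_weightedGraph_cutExp {κ : ℝ} (hP : formalAdjoint P = P) (hw : -κ < w.re)
    (h : (X - C w) ^ (n + 1) ∣ P) : ∃ x ∈ (weightedGraph κ P).adjoint,
      (x.1 =ᵐ[volume] fun t => Complex.exp (κ * t) * cutExp n w t) ∧
      x.2 =ᵐ[volume] fun t => Complex.exp (-κ * t) * diffOp P (cutExp n w) t := by
  have h₁ : MemLp (fun t : ℝ => Complex.exp (κ * t) * cutExp n w t) 2 := by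
    simp only [cexp_mul_cutExp]
    exact memLp_cutExp (by simpa using neg_lt_iff_pos_add'.1 hw) n
  have h₂ := memLp_cexp_mul (-κ) (contDiff_diffOp P (contDiff_cutExp n w)).continuous
    (hasCompactSupport_diffOp_cutExp h)
  exact ⟨(h₁.toLp _, h₂.toLp _), mem_adjoint_weightedGraph_of_contDiff hP (contDiff_cutExp n w)
    h₁.coeFn_toLp h₂.coeFn_toLp, h₁.coeFn_toLp, h₂.coeFn_toLp⟩

/-- The adjoint acts symmetrically on the two cut-off exponentials of exponents `z` and `-z̄` only
if their Lagrange form vanishes near `-∞`. -/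
theorem not_adjoint_weightedGraph_le {κ : ℝ} (hP : formalAdjoint P = P) (hP₀ : P ≠ 0)
    (hz : P.IsRoot z) (hzκ : |z.re| < κ) :
    ¬ (weightedGraph κ P).adjoint ≤ (weightedGraph κ P).adjoint.adjoint := by
  intro h_le
  obtain ⟨S, hPS, hS⟩ := exists_eq_pow_rootMultiplicity_mul_and_not_dvd P hP₀ z
  obtain ⟨n, hn⟩ := Nat.exists_eq_add_one_of_ne_zero ((rootMultiplicity_pos hP₀).2 hz).ne'
  rw [hn] at hPS
  have h_dvd : (X - C z) ^ (n + 1) ∣ P := ⟨S, hPS⟩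
  obtain ⟨x, hx, hx₁, hx₂⟩ := exists_mem_adjoint_weightedGraph_cutExp (n := 0) hP
    (abs_lt.1 hzκ).1 ((pow_dvd_pow _ (by simp)).trans h_dvd)
  obtain ⟨y, hy, hy₁, hy₂⟩ := exists_mem_adjoint_weightedGraph_cutExp hP
    (by simpa using (abs_lt.1 hzκ).2) (hP ▸ X_sub_C_pow_dvd_formalAdjoint h_dvd)
  have h_inner := mem_adjoint_iff_inner.1 (h_le hx) y hy
  have hκ : conj (κ : ℂ) = κ := Complex.conj_ofReal κ
  have hκ' : conj (-κ : ℂ) = -κ := by rw [map_neg, hκ]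
  have h_one (t : ℝ) : Complex.exp (-κ * t) * Complex.exp (κ * t) = 1 := by simp [← Complex.exp_add]
  have h₁ : inner ℂ y.2 x.1 = ∫ t, cutExp 0 z t * conj (diffOp P (cutExp n (-conj z)) t) := by
    rw [inner_of_ae_eq_cexp_mul hκ' hy₂]
    refine integral_congr_ae ?_
    filter_upwards [hx₁] with t ht
    rw [ht, ← mul_assoc, h_one, one_mul]
  have h₂ : inner ℂ y.1 x.2 = ∫ t, diffOp P (cutExp 0 z) t * conj (cutExp n (-conj z) t) := by
    rw [inner_of_ae_eq_cexp_mul hκ hy₁]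
    refine integral_congr_ae ?_
    filter_upwards [hx₂] with t ht
    rw [ht, ← mul_assoc, mul_comm (Complex.exp (κ * t)), h_one, one_mul]
  have h_lagrange := integral_diffOp_cutExp_mul_conj_sub z n hPS
  rw [hP, ← h₁, ← h₂, h_inner, sub_self, zero_eq_neg] at h_lagrange
  have hSz : S.eval z ≠ 0 := fun h => hS (dvd_iff_isRoot.2 h)
  simp [hSz, n.factorial_ne_zero] at h_lagrange

end CutoffExponentials

theorem essentiallySelfAdjoint_weightedGraph_iff {κ : ℝ} {P : ℂ[X]} (hP : formalAdjoint P = P)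
    (hP₀ : P ≠ 0) (hκ : 0 < κ) : EssentiallySelfAdjoint (weightedGraph κ P).toLinearPMap ↔
      ∀ z, P.IsRoot z → κ ≤ |z.re| := by
  rw [essentiallySelfAdjoint_toLinearPMap_iff (dense_map_fst_weightedGraph κ P)
    (weightedGraph_le_adjoint κ hP)]
  refine ⟨fun h z hz => ?_, adjoint_weightedGraph_le hP hP₀ hκ⟩
  contrapose! h
  exact not_adjoint_weightedGraph_le hP hP₀ hz h

section LogarithmicVariable

/-- The function `r ↦ r ^ s ψ(log r)` on the half-line; its values for `r ≤ 0` are junk. -/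
def powMulCompLog (s : ℂ) (ψ : ℝ → ℂ) (r : ℝ) : ℂ := (r : ℂ) ^ s * ψ (Real.log r)

variable {s : ℂ} {φ ψ : ℝ → ℂ}

lemma ofReal_exp_cpow (t : ℝ) (s : ℂ) : ((Real.exp t : ℝ) : ℂ) ^ s = Complex.exp (s * t) := by
  rw [Complex.cpow_def_of_ne_zero (Complex.ofReal_ne_zero.2 (Real.exp_pos t).ne'),
    ← Complex.ofReal_log (Real.exp_pos t).le, Real.log_exp, mul_comm]

@[simp]
lemma powMulCompLog_exp (s : ℂ) (ψ : ℝ → ℂ) (t : ℝ) :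
    powMulCompLog s ψ (Real.exp t) = Complex.exp (s * t) * ψ t := by
  rw [powMulCompLog, ofReal_exp_cpow, Real.log_exp]

lemma inv_pow_mul_powMulCompLog (n : ℕ) {r : ℝ} (hr : 0 < r) :
    ((r : ℂ) ^ n)⁻¹ * powMulCompLog s ψ r = powMulCompLog (s - n) ψ r := by
  have h0 : (r : ℂ) ≠ 0 := Complex.ofReal_ne_zero.2 hr.ne'
  rw [powMulCompLog, powMulCompLog, Complex.cpow_sub _ _ h0, Complex.cpow_natCast]
  ring

lemma deriv_eqOn_powMulCompLog (hψ : ContDiff ℝ ∞ ψ)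
    (h : Set.EqOn φ (powMulCompLog s ψ) (Set.Ioi 0)) :
    Set.EqOn (deriv φ) (powMulCompLog (s - 1) (diffOp (X + C s) ψ)) (Set.Ioi 0) := by
  intro r hr
  have h0 : (r : ℂ) ≠ 0 := Complex.ofReal_ne_zero.2 (Set.mem_Ioi.1 hr).ne'
  have hlog := (hψ.differentiable (by simp) (Real.log r)).hasDerivAt.scomp r
    (Real.hasDerivAt_log (Set.mem_Ioi.1 hr).ne')
  have hpow := ((hasDerivAt_id (r : ℂ)).cpow_const (c := s)
    (Complex.ofReal_mem_slitPlane.2 hr)).comp_ofReal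
  rw [h.deriv isOpen_Ioi hr]
  refine (hpow.mul hlog).deriv.trans ?_
  simp only [powMulCompLog, diffOp_add, diffOp_X, diffOp_C, Pi.add_apply, id, Complex.real_smul,
    Complex.cpow_sub _ _ h0, Complex.cpow_one, Function.comp_apply, Complex.ofReal_inv]
  field_simp
  ring

lemma deriv_deriv_eqOn_powMulCompLog (hψ : ContDiff ℝ ∞ ψ)
    (h : Set.EqOn φ (powMulCompLog s ψ) (Set.Ioi 0)) :
    Set.EqOn (deriv (deriv φ)) (powMulCompLog (s - 2) (diffOp ((X + C (s - 1)) * (X + C s)) ψ))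
      (Set.Ioi 0) := by
  rw [diffOp_mul _ _ hψ, show s - 2 = s - 1 - 1 by ring]
  exact deriv_eqOn_powMulCompLog (contDiff_diffOp _ hψ) (deriv_eqOn_powMulCompLog hψ h)

lemma exists_eqOn_powMulCompLog (s : ℂ) (hφ : ContDiff ℝ ∞ φ) (hφc : HasCompactSupport φ)
    (hφs : tsupport φ ⊆ Set.Ioi 0) : ∃ ψ : ℝ → ℂ, ContDiff ℝ ∞ ψ ∧ HasCompactSupport ψ ∧
      Set.EqOn φ (powMulCompLog s ψ) (Set.Ioi 0) := by
  refine ⟨fun t => Complex.exp (-s * t) * φ (Real.exp t),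
    (contDiff_cexp_mul _).mul (hφ.comp Real.contDiff_exp), ?_, fun r hr => ?_⟩
  · have hK : IsCompact (Real.log '' tsupport φ) :=
      hφc.isCompact.image_of_continuousOn
        (Real.continuousOn_log.mono fun x hx => ne_of_gt (hφs hx))
    refine HasCompactSupport.of_support_subset_isCompact hK fun t ht => ?_
    exact ⟨Real.exp t, subset_tsupport _ (right_ne_zero_of_mul ht), Real.log_exp t⟩
  · rw [← Real.exp_log hr, powMulCompLog_exp, ← mul_assoc, ← Complex.exp_add]
    simp

lemma contDiffAt_powMulCompLog (s : ℂ) (hψ : ContDiff ℝ ∞ ψ) {r : ℝ} (hr : 0 < r) :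
    ContDiffAt ℝ ∞ (powMulCompLog s ψ) r := by
  have hlog : ContDiffAt ℝ ∞ Real.log r := Real.contDiffAt_log.2 hr.ne'
  refine ((((contDiff_cexp_mul s).mul hψ).contDiffAt.comp r hlog)).congr_of_eventuallyEq ?_
  filter_upwards [isOpen_Ioi.mem_nhds hr] with x hx
  rw [← Real.exp_log hx, powMulCompLog_exp, Function.comp_apply, Real.log_exp]

lemma exists_testFunction_eqOn_powMulCompLog (s : ℂ) (hψ : ContDiff ℝ ∞ ψ)
    (hψc : HasCompactSupport ψ) : ∃ φ : ℝ → ℂ, ContDiff ℝ ∞ φ ∧ HasCompactSupport φ ∧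
      tsupport φ ⊆ Set.Ioi 0 ∧ Set.EqOn φ (powMulCompLog s ψ) (Set.Ioi 0) := by
  set φ := (Set.Ioi 0).indicator (powMulCompLog s ψ)
  have heq : Set.EqOn φ (powMulCompLog s ψ) (Set.Ioi 0) := fun r hr => Set.indicator_of_mem hr _
  have hK : IsCompact (Real.exp '' tsupport ψ) := hψc.isCompact.image Real.continuous_exp
  have hsupp : Function.support φ ⊆ Real.exp '' tsupport ψ := by
    intro r hr
    obtain ⟨h0, h⟩ := Set.indicator_apply_ne_zero.1 hr
    exact ⟨Real.log r, subset_tsupport _ (right_ne_zero_of_mul h), Real.exp_log h0⟩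
  have htsupp : tsupport φ ⊆ Set.Ioi 0 := by
    refine (closure_minimal hsupp hK.isClosed).trans ?_
    rintro _ ⟨t, -, rfl⟩
    exact Real.exp_pos t
  refine ⟨φ, contDiff_iff_contDiffAt.2 fun r => ?_,
    HasCompactSupport.of_support_subset_isCompact hK hsupp, htsupp, heq⟩
  by_cases hr : 0 < r
  · exact (contDiffAt_powMulCompLog s hψ hr).congr_of_eventuallyEq
      (heq.eventuallyEq_of_mem (isOpen_Ioi.mem_nhds hr))
  · have h0 : φ =ᶠ[𝓝 r] 0 := notMem_tsupport_iff_eventuallyEq.1 fun h => hr (htsupp h)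
    exact contDiffAt_const.congr_of_eventuallyEq h0

end LogarithmicVariable

section LogCoordinate

lemma lebIoi_eq_map_exp :
    lebIoi = (volume.withDensity fun t : ℝ => ENNReal.ofReal (Real.exp t)).map Real.exp := by
  refine Measure.ext fun A hA => ?_
  have h := lintegral_image_eq_lintegral_abs_deriv_mul (s := Set.univ) MeasurableSet.univ
    (fun x _ => (Real.hasDerivAt_exp x).hasDerivWithinAt) Real.exp_injective.injOn
    (A.indicator 1)
  rw [Set.image_univ, Real.range_exp, setLIntegral_univ, ← lebIoi, lintegral_indicator_one hA] at h
  rw [h, Measure.map_apply Real.measurable_exp hA, withDensity_apply _ (Real.measurable_exp hA),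
    ← lintegral_indicator (Real.measurable_exp hA)]
  refine lintegral_congr fun t => ?_
  by_cases ht : Real.exp t ∈ A <;> simp [ht, Set.indicator]

lemma measurableEmbedding_exp : MeasurableEmbedding Real.exp :=
  Real.continuous_exp.measurableEmbedding Real.exp_injective

lemma lintegral_lebIoi (F : ℝ → ℝ≥0∞) :
    ∫⁻ r, F r ∂lebIoi = ∫⁻ t, ENNReal.ofReal (Real.exp t) * F (Real.exp t) := by
  rw [lebIoi_eq_map_exp, measurableEmbedding_exp.lintegral_map,
    lintegral_withDensity_eq_lintegral_mul_non_measurable _ (by fun_prop) (by simp)]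
  rfl

lemma ae_lebIoi_iff {p : ℝ → Prop} : (∀ᵐ r ∂lebIoi, p r) ↔ ∀ᵐ t : ℝ, p (Real.exp t) := by
  rw [lebIoi_eq_map_exp, measurableEmbedding_exp.ae_map_iff, ae_withDensity_iff (by fun_prop)]
  simp [Real.exp_pos]

/-- The pullback `u ↦ e^{t/2} u(e^t)` to the logarithmic variable, normalized so as to preserve
`L²` norms. -/
def logPullback (u : ℝ → ℂ) (t : ℝ) : ℂ := Complex.exp (1 / 2 * t) * u (Real.exp t)

variable {u v : ℝ → ℂ}

lemma logPullback_ae_eq_iff :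
    logPullback u =ᵐ[volume] logPullback v ↔ u =ᵐ[lebIoi] v := by
  simp only [EventuallyEq, ae_lebIoi_iff, logPullback, mul_right_inj' (Complex.exp_ne_zero _)]

lemma logPullback_powMulCompLog (s : ℂ) (ψ : ℝ → ℂ) :
    logPullback (powMulCompLog s ψ) = fun t : ℝ => Complex.exp ((s + 1 / 2) * t) * ψ t := by
  ext t
  rw [logPullback, powMulCompLog_exp, ← mul_assoc, ← Complex.exp_add, add_mul, add_comm]

lemma eLpNorm_logPullback (u : ℝ → ℂ) :
    eLpNorm (logPullback u) 2 volume = eLpNorm u 2 lebIoi := by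
  rw [eLpNorm_eq_lintegral_rpow_enorm_toReal two_ne_zero ENNReal.ofNat_ne_top,
    eLpNorm_eq_lintegral_rpow_enorm_toReal two_ne_zero ENNReal.ofNat_ne_top, lintegral_lebIoi]
  congr 1
  refine lintegral_congr fun t => ?_
  rw [ENNReal.toReal_ofNat, ENNReal.rpow_two, ENNReal.rpow_two, logPullback, enorm_mul, mul_pow]
  congr 1
  rw [← enorm_pow, ← Complex.exp_nat_mul, ← ofReal_norm, Complex.norm_exp]
  simp

lemma memLp_logPullback (u : Lp ℂ 2 lebIoi) : MemLp (logPullback u) 2 := by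
  refine ⟨StronglyMeasurable.aestronglyMeasurable ?_, ?_⟩
  · exact (Continuous.stronglyMeasurable (by fun_prop)).mul
      ((Lp.stronglyMeasurable u).comp_measurable Real.measurable_exp)
  · exact eLpNorm_logPullback u ▸ Lp.eLpNorm_lt_top u

/-- The isometry `u ↦ e^{t/2} u(e^t)` from `L²((0,∞); dr)` to `L²(ℝ; dt)`. -/
def logPullbackₗᵢ : Lp ℂ 2 lebIoi →ₗᵢ[ℂ] Lp ℂ 2 (volume : Measure ℝ) where
  toFun u := (memLp_logPullback u).toLp
  map_add' u v := by
    rw [← MemLp.toLp_add, MemLp.toLp_eq_toLp_iff]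
    filter_upwards [ae_lebIoi_iff.1 (Lp.coeFn_add u v)] with t ht
    simp only [logPullback, Pi.add_apply, ht, mul_add]
  map_smul' c u := by
    rw [RingHom.id_apply, ← MemLp.toLp_const_smul, MemLp.toLp_eq_toLp_iff]
    filter_upwards [ae_lebIoi_iff.1 (Lp.coeFn_smul c u)] with t ht
    simp only [logPullback, Pi.smul_apply, ht, mul_smul_comm]
  norm_map' u := by
    change ‖(memLp_logPullback u).toLp‖ = ‖u‖
    rw [Lp.norm_toLp, eLpNorm_logPullback, Lp.norm_def]

lemma logPullbackₗᵢ_surjective : Function.Surjective logPullbackₗᵢ := by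
  intro f
  have hf : logPullback (powMulCompLog (-(1 / 2)) f) = f := by
    simp [logPullback_powMulCompLog]
  have hmem : MemLp (powMulCompLog (-(1 / 2)) f) 2 lebIoi := by
    refine ⟨StronglyMeasurable.aestronglyMeasurable ?_, ?_⟩
    · exact (Measurable.stronglyMeasurable (by fun_prop)).mul
        ((Lp.stronglyMeasurable f).comp_measurable Real.measurable_log)
    · rw [← eLpNorm_logPullback, hf]
      exact Lp.eLpNorm_lt_top f
  refine ⟨hmem.toLp, Lp.ext ((memLp_logPullback _).coeFn_toLp.trans ?_)⟩
  exact (logPullback_ae_eq_iff.2 hmem.coeFn_toLp).trans (.of_eq hf)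

/-- The unitary map `u ↦ e^{t/2} u(e^t)` from `L²((0,∞); dr)` onto `L²(ℝ; dt)`. -/
def logUnitary : Lp ℂ 2 lebIoi ≃ₗᵢ[ℂ] Lp ℂ 2 (volume : Measure ℝ) :=
  LinearIsometryEquiv.ofSurjective logPullbackₗᵢ logPullbackₗᵢ_surjective

lemma logUnitary_ae_eq_iff {u : Lp ℂ 2 lebIoi} {s : ℂ} {φ ψ : ℝ → ℂ}
    (h : Set.EqOn φ (powMulCompLog s ψ) (Set.Ioi 0)) :
    (logUnitary u =ᵐ[volume] fun t : ℝ => Complex.exp ((s + 1 / 2) * t) * ψ t) ↔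
      u =ᵐ[lebIoi] φ := by
  have hu : logUnitary u =ᵐ[volume] logPullback u := (memLp_logPullback u).coeFn_toLp
  have hφ : φ =ᵐ[lebIoi] powMulCompLog s ψ :=
    ae_lebIoi_iff.2 (.of_forall fun t => h (Real.exp_pos t))
  rw [← logPullback_powMulCompLog, hu.congr_left, logPullback_ae_eq_iff, hφ.symm.congr_right]

end LogCoordinate

section EulerOperator

/-- The differential expression `L` on the half-line is of Euler type, homogeneous of degree `-2κ`,
with symbol `P`: it takes `r ^ (κ - 1/2) ψ(log r)` to `r ^ (-κ - 1/2) (P(D) ψ)(log r)`. The powers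
of `r` are centred so that formally symmetric `L` correspond to formally symmetric `P(D)`. -/
def IsEulerExpr (L : (ℝ → ℂ) → (ℝ → ℂ)) (κ : ℝ) (P : ℂ[X]) : Prop :=
  ∀ ⦃φ ψ : ℝ → ℂ⦄, ContDiff ℝ ∞ ψ → Set.EqOn φ (powMulCompLog (κ - 1 / 2) ψ) (Set.Ioi 0) →
    Set.EqOn (L φ) (powMulCompLog (-κ - 1 / 2) (diffOp P ψ)) (Set.Ioi 0)

variable {L : (ℝ → ℂ) → (ℝ → ℂ)} {κ : ℝ} {P : ℂ[X]}

lemma logUnitary_mem_weightedGraph_iff (hL : IsEulerExpr L κ P)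
    (p : Lp ℂ 2 lebIoi × Lp ℂ 2 lebIoi) :
    (logUnitary p.1, logUnitary p.2) ∈ weightedGraph κ P ↔ p ∈ graphOnHalfLine L := by
  have hmem {p : Lp ℂ 2 lebIoi × Lp ℂ 2 lebIoi} {φ ψ : ℝ → ℂ} (hψ : ContDiff ℝ ∞ ψ)
      (h : Set.EqOn φ (powMulCompLog (κ - 1 / 2) ψ) (Set.Ioi 0)) :
      ((logUnitary p.1 =ᵐ[volume] fun t : ℝ => Complex.exp (κ * t) * ψ t) ∧
        logUnitary p.2 =ᵐ[volume] fun t : ℝ => Complex.exp (-κ * t) * diffOp P ψ t) ↔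
      p.1 =ᵐ[lebIoi] φ ∧ p.2 =ᵐ[lebIoi] L φ := by
    rw [← logUnitary_ae_eq_iff h, ← logUnitary_ae_eq_iff (hL hψ h), sub_add_cancel,
      sub_add_cancel]
  refine mem_span_iff_of_linearEquiv
    (logUnitary.toLinearEquiv.prodCongr logUnitary.toLinearEquiv) (fun p => ⟨?_, ?_⟩) p
  · rintro ⟨ψ, hψ, hψc, hp⟩
    obtain ⟨φ, hφ, hφc, hφs, h⟩ :=
      exists_testFunction_eqOn_powMulCompLog (κ - 1 / 2) hψ hψc
    exact ⟨φ, hφ, hφc, hφs, (hmem hψ h).1 hp⟩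
  · rintro ⟨φ, hφ, hφc, hφs, hp⟩
    obtain ⟨ψ, hψ, hψc, h⟩ := exists_eqOn_powMulCompLog (κ - 1 / 2) hφ hφc hφs
    exact ⟨ψ, hψ, hψc, (hmem hψ h).2 hp⟩

theorem essentiallySelfAdjoint_opOnHalfLine_iff (hL : IsEulerExpr L κ P)
    (hP : formalAdjoint P = P) (hP₀ : P ≠ 0) (hκ : 0 < κ) :
    EssentiallySelfAdjoint (opOnHalfLine L) ↔ ∀ z, P.IsRoot z → κ ≤ |z.re| := by
  rw [opOnHalfLine, essentiallySelfAdjoint_iff_of_unitaryEquiv logUnitary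
    (logUnitary_mem_weightedGraph_iff hL) (dense_map_fst_weightedGraph κ P)
    (weightedGraph_le_adjoint κ hP)]
  exact essentiallySelfAdjoint_weightedGraph_iff hP hP₀ hκ

end EulerOperator

section Biquadratic

lemma le_abs_re_iff {κ : ℝ} (hκ : 0 ≤ κ) (z : ℂ) :
    κ ≤ |z.re| ↔ 2 * κ ^ 2 ≤ ‖z ^ 2‖ + (z ^ 2).re := by
  have hre : ‖z ^ 2‖ + (z ^ 2).re = 2 * z.re ^ 2 := by
    rw [norm_pow, Complex.sq_norm, Complex.normSq_apply, pow_two z, Complex.mul_re]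
    ring
  rw [hre, ← abs_of_nonneg hκ, ← sq_le_sq, abs_of_nonneg hκ]
  constructor <;> intro h <;> linarith

variable {a b m : ℝ}

lemma le_norm_add_re_of_quadratic_root (h₁ : -(2 * m) ≤ a → (a / 2 + 2 * m) ^ 2 ≤ b)
    (h₂ : a < -(2 * m) → 0 ≤ m ^ 2 + a * m + b) (hm : 0 < m) {w : ℂ}
    (hw : w ^ 2 + a * w + b = 0) : 2 * m ≤ ‖w‖ + w.re := by
  have hre : w.re ^ 2 - w.im ^ 2 + a * w.re + b = 0 := by
    simpa [pow_two] using congrArg Complex.re hw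
  have him : w.im * (2 * w.re + a) = 0 := by
    linear_combination (by simpa [pow_two] using congrArg Complex.im hw :
      w.re * w.im + w.im * w.re + a * w.im = 0)
  rcases mul_eq_zero.1 him with hreal | hpair
  · suffices m ≤ w.re by linarith [Complex.re_le_norm w]
    rw [hreal] at hre
    rcases le_or_gt (-(2 * m)) a with ha | ha
    · have hb := h₁ ha
      have : a = -(2 * m) := le_antisymm (by nlinarith [sq_nonneg (2 * w.re + a)]) ha
      nlinarith [sq_nonneg (w.re - m)]
    · have hb := h₂ ha
      by_contra! hlt
      nlinarith
  · rcases le_or_gt (-(2 * m)) a with ha | ha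
    · have hnorm : ‖w‖ ^ 2 = b := by
        rw [Complex.sq_norm, Complex.normSq_apply]
        linear_combination (-1 : ℝ) * hre + w.re * hpair
      linarith [le_of_sq_le_sq ((h₁ ha).trans_eq hnorm.symm) (norm_nonneg w)]
    · linarith [Complex.re_le_norm w]

lemma quadratic_coeff_bounds (hm : 0 < m)
    (h : ∀ w : ℂ, w ^ 2 + a * w + b = 0 → 2 * m ≤ ‖w‖ + w.re) :
    (-(2 * m) ≤ a → (a / 2 + 2 * m) ^ 2 ≤ b) ∧ (a < -(2 * m) → 0 ≤ m ^ 2 + a * m + b) := by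
  rcases lt_or_ge (a ^ 2) (4 * b) with hdisc | hdisc
  · refine ⟨fun ha => ?_, fun _ => by nlinarith [sq_nonneg (2 * m + a)]⟩
    set v := √(b - a ^ 2 / 4)
    have hv : v ^ 2 = b - a ^ 2 / 4 := Real.sq_sqrt (by linarith)
    have hroot := h ⟨-a / 2, v⟩ (by
      apply Complex.ext <;> simp [pow_two] <;> nlinarith)
    have hnorm : ‖(⟨-a / 2, v⟩ : ℂ)‖ ^ 2 = b := by
      rw [Complex.sq_norm, Complex.normSq_mk]
      linarith
    rw [← hnorm]
    exact pow_le_pow_left₀ (by linarith) (by linarith) 2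
  · set d := √(a ^ 2 - 4 * b)
    have hd : d ^ 2 = a ^ 2 - 4 * b := Real.sq_sqrt (by linarith)
    have hd0 : 0 ≤ d := Real.sqrt_nonneg _
    have hroot := h (((-a - d) / 2 : ℝ) : ℂ) (by
      norm_cast
      linarith)
    rw [Complex.norm_real, Complex.ofReal_re, Real.norm_eq_abs] at hroot
    have hle : m ≤ (-a - d) / 2 := by
      cases abs_cases ((-a - d) / 2) <;> linarith
    exact ⟨fun ha => by nlinarith, fun _ => by nlinarith⟩

/-- The even symbol `z⁴ + a z² + b`. -/
def biquadratic (a b : ℝ) : ℂ[X] := X ^ 4 + C (a : ℂ) * X ^ 2 + C (b : ℂ)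

lemma biquadratic_ne_zero (a b : ℝ) : biquadratic a b ≠ 0 := by
  refine Monic.ne_zero ?_
  unfold biquadratic
  monicity!

lemma formalAdjoint_biquadratic (a b : ℝ) : formalAdjoint (biquadratic a b) = biquadratic a b := by
  simp [formalAdjoint, biquadratic, Even.neg_pow (by decide : Even 4)]

lemma forall_isRoot_biquadratic_le_abs_re_iff {κ : ℝ} (hκ : 0 < κ) :
    (∀ z, (biquadratic a b).IsRoot z → κ ≤ |z.re|) ↔
      (-(2 * κ ^ 2) ≤ a → (a / 2 + 2 * κ ^ 2) ^ 2 ≤ b) ∧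
        (a < -(2 * κ ^ 2) → 0 ≤ κ ^ 4 + a * κ ^ 2 + b) := by
  have hroot (z : ℂ) : (biquadratic a b).IsRoot z ↔ (z ^ 2) ^ 2 + a * z ^ 2 + b = 0 := by
    simp [biquadratic, IsRoot.def, ← pow_mul]
  simp only [hroot, le_abs_re_iff hκ.le]
  rw [show κ ^ 4 = (κ ^ 2) ^ 2 by ring]
  refine ⟨fun h => quadratic_coeff_bounds (pow_pos hκ 2) fun w hw => ?_,
    fun h z hz => le_norm_add_re_of_quadratic_root h.1 h.2 (pow_pos hκ 2) hz⟩
  obtain ⟨z, rfl⟩ := IsAlgClosed.exists_pow_nat_eq w two_pos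
  exact h z hw

end Biquadratic

lemma isEulerExpr_tau2exp (c₁ c₂ : ℝ) : IsEulerExpr (tau2exp c₁ c₂) 2
    (biquadratic (2 * c₁ - 5 / 2) (9 / 16 + 3 * c₁ / 2 + c₂)) := by
  intro φ ψ hψ hφ r hr
  have hφ₂ := deriv_deriv_eqOn_powMulCompLog hψ hφ
  have hφ₄ := deriv_deriv_eqOn_powMulCompLog (contDiff_diffOp _ hψ) hφ₂
  have hquot : Set.EqOn (fun s : ℝ => ((s : ℂ) ^ 2)⁻¹ * φ s)
      (powMulCompLog ((2 : ℝ) - 1 / 2 - (2 : ℕ)) ψ) (Set.Ioi 0) := fun s hs => by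
    simp only [hφ hs, inv_pow_mul_powMulCompLog 2 hs]
  have hquot₂ := deriv_deriv_eqOn_powMulCompLog hψ hquot
  rw [← diffOp_mul _ _ hψ] at hφ₄
  rw [tau2exp, hφ₄ hr, hφ₂ hr, hquot₂ hr, hφ hr, mul_assoc (c₂ : ℂ),
    inv_pow_mul_powMulCompLog 2 hr, inv_pow_mul_powMulCompLog 4 hr]
  have hsymbol : biquadratic (2 * c₁ - 5 / 2) (9 / 16 + 3 * c₁ / 2 + c₂) =
      (X + C (-3 / 2)) * (X + C (-1 / 2)) * ((X + C (1 / 2)) * (X + C (3 / 2)))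
        + C (c₁ : ℂ) * ((X + C (1 / 2)) * (X + C (3 / 2)) + (X + C (-3 / 2)) * (X + C (-1 / 2)))
        + C (c₂ : ℂ) := by
    refine Polynomial.funext fun z => ?_
    simp only [biquadratic, eval_add, eval_mul, eval_pow, eval_X, eval_C]
    push_cast
    ring
  rw [hsymbol]
  simp only [diffOp_add, diffOp_C_mul, diffOp_C, Pi.add_apply, powMulCompLog]
  push_cast
  ring_nf

theorem stmt1 (c₁ c₂ : ℝ) :
    EssentiallySelfAdjoint (tau2op c₁ c₂) ↔
      ((-11/4 ≤ c₁ → 45 + 12 * c₁ + c₁ ^ 2 ≤ c₂) ∧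
        (c₁ < -11/4 → -105/16 - (19/2) * c₁ ≤ c₂)) := by
  rw [tau2op, essentiallySelfAdjoint_opOnHalfLine_iff (isEulerExpr_tau2exp c₁ c₂)
    (formalAdjoint_biquadratic _ _) (biquadratic_ne_zero _ _) two_pos,
    forall_isRoot_biquadratic_le_abs_re_iff two_pos]
  refine and_congr (imp_congr ?_ ?_) (imp_congr ?_ ?_) <;>
    constructor <;> intro h <;> linarith
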